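/- arXiv:1610.03537 — 8 statements merged into one kernel-verified Lean document; each statement's English description precedes it below -/
import Mathlib

section
/- Let (X,T) be a minimal Cantor system, let p : X → ℤ⁺ be a function, and suppose that S(x) = T^{p(x)}(x) defines a homeomorphism S : X → X (i.e. S is a speedup of (X,T)). Then p is bounded if and only if p is continuous. -/
/-- A minimal Cantor-type dynamical system: every `T`-orbit (over `ℤ`) is dense. -/
def IsMinimalHomeo {X : Type*} [TopologicalSpace X] (T : Equiv.Perm X) : Prop :=
  ∀ x : X, Dense (Set.range fun n : ℤ => (T ^ n) x)

/-- A minimal bijection of a perfect `T₁` space has no periodic points. -/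
theorem IsMinimalHomeo.pow_apply_injective {X : Type*} [TopologicalSpace X] [T1Space X]
    [PerfectSpace X] {T : Equiv.Perm X} (hT : IsMinimalHomeo T) (x : X) :
    Function.Injective fun n : ℕ => (T ^ n) x := by
  have aperiodic (n : ℤ) (hn : 0 < n) : (T ^ n) x ≠ x := by
    intro hx
    have hfin : (Set.range fun k : ℤ => (T ^ k) x).Finite := by
      refine ((Set.finite_Ico (0 : ℤ) n).image fun k : ℤ => (T ^ k) x).subset ?_
      rintro _ ⟨k, rfl⟩
      refine ⟨k % n, ⟨Int.emod_nonneg k hn.ne', Int.emod_lt_of_pos k hn⟩, ?_⟩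
      have hfix : ((T ^ n) ^ (k / n)) x = x := Function.IsFixedPt.perm_zpow hx (k / n)
      have hk : T ^ k = T ^ (k % n) * (T ^ n) ^ (k / n) := by
        rw [← zpow_mul, ← zpow_add, Int.emod_add_mul_ediv]
      simp only [hk, Equiv.Perm.mul_apply, hfix]
    have huniv := (hT x).closure_eq
    rw [hfin.isClosed.closure_eq] at huniv
    rw [huniv] at hfin
    exact infinite_of_mem_nhds x Filter.univ_mem hfin
  refine Function.Injective.of_lt_imp_ne fun m n hmn h => aperiodic (n - m) (by omega) ?_
  have h' : (T ^ (m : ℤ)) x = (T ^ (n : ℤ)) x := by simpa only [zpow_natCast] using h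
  rw [sub_eq_neg_add, zpow_add, Equiv.Perm.mul_apply, ← h', zpow_neg]
  exact (T ^ (m : ℤ)).symm_apply_apply x

/-- Let `(X,T)` be a minimal Cantor system, `p : X → ℤ⁺`, and suppose
`S x = T^(p x) x` defines a homeomorphism of `X`. Then `p` is bounded iff `p` is continuous. -/
theorem speedup_jump_bounded_iff_continuous
    {X : Type*} [TopologicalSpace X] [CompactSpace X]
    [TopologicalSpace.MetrizableSpace X] [TotallyDisconnectedSpace X] [PerfectSpace X]
    [Nonempty X]
    (T : Equiv.Perm X) (hTc : Continuous T) (hTc' : Continuous T.symm)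
    (hTmin : IsMinimalHomeo T)
    (p : X → ℕ) (hp1 : ∀ x, 1 ≤ p x)
    (S : Equiv.Perm X) (hSc : Continuous S) (hSc' : Continuous S.symm)
    (hSp : ∀ x, S x = (T ^ p x) x) :
    (∃ M : ℕ, ∀ x, p x ≤ M) ↔ Continuous p := by
  constructor
  · rintro ⟨M, hM⟩
    have hlevel (n : ℕ) : IsClosed {x | p x = n} := by
      have heq : {x | p x = n} = {x | S x = (T ^ n) x} := by
        ext x
        simpa only [Set.mem_ofPred_eq, hSp] using (hTmin.pow_apply_injective x).eq_iff.symm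
      rw [heq]
      refine isClosed_eq hSc ?_
      rw [Equiv.Perm.coe_pow]
      exact hTc.iterate n
    refine continuous_iff_isClosed.2 fun s _ => ?_
    have hs : p ⁻¹' s = ⋃ n ∈ s ∩ Set.Iic M, {x | p x = n} := by
      ext x
      simp [hM x]
    rw [hs]
    exact ((Set.finite_Iic M).inter_of_right s).isClosed_biUnion fun n _ => hlevel n
  · intro hp
    obtain ⟨M, hM⟩ := (isCompact_range hp).bddAbove
    exact ⟨M, fun x => hM ⟨x, rfl⟩⟩
end

section
/- Let (X,T) be a minimal Cantor system and let S be a bounded speedup of T, with S(x) = T^{p(x)}(x) for a bounded p : X → ℤ⁺. Then there is a positive integer c such that for every x ∈ X, the T-orbit {T^n x : n ∈ ℤ} of x is the union of exactly c distinct S-orbits; that is, the set of S-orbits contained in the T-orbit of x has cardinality c, independently of x. -/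
/-- The (two-sided) orbit of a point under a bijection. -/
def zOrbit {X : Type*} (T : Equiv.Perm X) (x : X) : Set X :=
  Set.range fun n : ℤ => (T ^ n) x

namespace BoundedSpeedup

variable {X : Type*}

lemma zOrbit_zpow (T : Equiv.Perm X) (x : X) (n : ℤ) : zOrbit T ((T ^ n) x) = zOrbit T x := by
  ext y
  constructor
  · rintro ⟨m, rfl⟩
    exact ⟨m + n, by simp [zpow_add]⟩
  · rintro ⟨m, rfl⟩
    exact ⟨m - n, by simp [← Equiv.Perm.mul_apply, ← zpow_add]⟩

lemma mem_zOrbit_self (T : Equiv.Perm X) (x : X) : x ∈ zOrbit T x := ⟨0, by simp⟩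

/-- A minimal homeomorphism of a nonempty perfect `T₁` space acts freely. -/
lemma zpow_apply_injective [TopologicalSpace X] [T1Space X] [PerfectSpace X] [Nonempty X]
    {T : Equiv.Perm X} (hT : IsMinimalHomeo T) (x : X) :
    Function.Injective fun n : ℤ => (T ^ n) x := by
  by_contra hinj
  obtain ⟨a, b, hab, hne⟩ : ∃ a b : ℤ, (T ^ a) x = (T ^ b) x ∧ a ≠ b := by
    simpa [Function.Injective] using hinj
  have hper : (T ^ (a - b)) x = x := by
    rw [sub_eq_neg_add, zpow_add, Equiv.Perm.mul_apply, hab, ← Equiv.Perm.mul_apply, ← zpow_add]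
    simp
  have hsub : Set.range (fun n : ℤ => (T ^ n) x) ⊆
      (fun n : ℤ => (T ^ n) x) '' Set.Ico 0 |a - b| := by
    rintro _ ⟨n, rfl⟩
    refine ⟨n % (a - b), ⟨Int.emod_nonneg _ (sub_ne_zero.2 hne),
      Int.emod_lt_abs _ (sub_ne_zero.2 hne)⟩, ?_⟩
    dsimp only
    conv_rhs => rw [← Int.emod_add_mul_ediv n (a - b), zpow_add, Equiv.Perm.mul_apply, zpow_mul,
      Equiv.Perm.zpow_apply_eq_self_of_apply_eq_self hper]
  have hfin := ((Set.finite_Ico _ _).image _).subset hsub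
  have huniv : (Set.univ : Set X).Finite := by
    rw [← (hT x).closure_eq, hfin.isClosed.closure_eq]
    exact hfin
  exact (infinite_of_mem_nhds x Filter.univ_mem) huniv

/-- Along an `S`-orbit inside the `T`-orbit of `x`, the `T`-time advances by the jump function. -/
lemma exists_time {T S : Equiv.Perm X} {p : X → ℕ} (hSp : ∀ x, S x = (T ^ p x) x) {x : X}
    (hx : Function.Injective fun n : ℤ => (T ^ n) x) (m : ℤ) :
    ∃ t : ℤ → ℤ, t 0 = m ∧ (∀ k, (S ^ k) ((T ^ m) x) = (T ^ t k) x) ∧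
      ∀ k, t (k + 1) = t k + p ((T ^ t k) x) := by
  have hex : ∀ k : ℤ, ∃ n : ℤ, (S ^ k) ((T ^ m) x) = (T ^ n) x := by
    intro k
    induction k with
    | zero => exact ⟨m, by simp⟩
    | succ k ih =>
      obtain ⟨n, hn⟩ := ih
      refine ⟨p ((T ^ n) x) + n, ?_⟩
      rw [add_comm, zpow_add, Equiv.Perm.mul_apply, hn, zpow_one, hSp, zpow_add,
        Equiv.Perm.mul_apply, zpow_natCast]
    | pred k ih =>
      obtain ⟨n, hn⟩ := ih
      set z := (S ^ (-(k : ℤ) - 1)) ((T ^ m) x) with hz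
      have hSz : S z = (T ^ n) x := by
        rw [← hn, hz, ← Equiv.Perm.mul_apply, ← zpow_one_add]
        congr 2
        ring
      refine ⟨-p z + n, ?_⟩
      rw [zpow_add, Equiv.Perm.mul_apply, ← hSz, hSp, zpow_neg, zpow_natCast,
        Equiv.Perm.inv_def, Equiv.symm_apply_apply]
  choose t ht using hex
  refine ⟨t, hx ?_, ht, fun k => hx ?_⟩
  · simpa using (ht 0).symm
  · dsimp only
    rw [← ht, add_comm k, zpow_add, Equiv.Perm.mul_apply, ht, zpow_one, hSp, add_comm, zpow_add,
      Equiv.Perm.mul_apply, zpow_natCast]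

/-- The backward times `j` from which the jump reaches `x` or passes over it. -/
def crossings (T : Equiv.Perm X) (p : X → ℕ) (M : ℕ) (x : X) : Finset ℕ :=
  {j ∈ Finset.Icc 1 M | j ≤ p ((T ^ (-(j : ℤ))) x)}

lemma exists_crossing {t : ℤ → ℤ} (ht : StrictMono t) : ∃ k, t k < 0 ∧ 0 ≤ t (k + 1) := by
  have hmono : Monotone fun k => t k - k :=
    monotone_int_of_le_succ fun k => by
      have := ht (lt_add_one k)
      lia
  obtain ⟨k, hk, hmin⟩ := Int.exists_least_of_bdd (P := fun k => 0 ≤ t k)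
    ⟨-|t 0|, fun z hz => by
      by_contra! hlt
      have h0 : z ≤ 0 := by
        have := abs_nonneg (t 0)
        lia
      have := hmono h0
      have := le_abs_self (t 0)
      dsimp only at *
      lia⟩
    ⟨|t 0|, by
      have := hmono (abs_nonneg (t 0))
      have := neg_abs_le (t 0)
      dsimp only at *
      lia⟩
  refine ⟨k - 1, ?_, by simpa using hk⟩
  by_contra! h
  have := hmin _ h
  lia

lemma setOf_orbits_eq_image {T S : Equiv.Perm X} {p : X → ℕ} {M : ℕ}
    (hSp : ∀ x, S x = (T ^ p x) x) (hp1 : ∀ x, 1 ≤ p x) (hM : ∀ x, p x ≤ M) {x : X}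
    (hx : Function.Injective fun n : ℤ => (T ^ n) x) :
    {O : Set X | (∃ y : X, O = zOrbit S y) ∧ O ⊆ zOrbit T x} =
      (fun j : ℕ => zOrbit S ((T ^ (-(j : ℤ))) x)) '' (crossings T p M x : Set ℕ) := by
  ext O
  constructor
  · rintro ⟨⟨y, rfl⟩, hy⟩
    obtain ⟨m, rfl⟩ := hy (mem_zOrbit_self S y)
    obtain ⟨t, -, ht, hstep⟩ := exists_time hSp hx m
    have hmono : StrictMono t := strictMono_int_of_lt_succ fun k => by
      have := hp1 ((T ^ t k) x)
      have := hstep k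
      lia
    obtain ⟨k, hk, hk'⟩ := exists_crossing hmono
    obtain ⟨j, hj⟩ := Int.exists_eq_neg_ofNat hk.le
    refine ⟨j, ?_, ?_⟩
    · have h1 := hstep k
      have h2 := hM ((T ^ t k) x)
      simp only [crossings, Finset.coe_filter, Finset.mem_Icc, Set.mem_ofPred_eq]
      rw [← hj]
      lia
    · dsimp only
      rw [← hj, ← ht, zOrbit_zpow]
  · rintro ⟨j, -, rfl⟩
    refine ⟨⟨_, rfl⟩, ?_⟩
    rintro _ ⟨k, rfl⟩
    obtain ⟨t, -, ht, -⟩ := exists_time hSp hx (-(j : ℤ))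
    exact ⟨t k, (ht k).symm⟩

lemma injOn_crossings {T S : Equiv.Perm X} {p : X → ℕ} {M : ℕ}
    (hSp : ∀ x, S x = (T ^ p x) x) (hp1 : ∀ x, 1 ≤ p x) {x : X}
    (hx : Function.Injective fun n : ℤ => (T ^ n) x) :
    Set.InjOn (fun j : ℕ => zOrbit S ((T ^ (-(j : ℤ))) x)) (crossings T p M x : Set ℕ) := by
  intro i hi j hj hij
  simp only [crossings, Finset.coe_filter, Finset.mem_Icc, Set.mem_ofPred_eq] at hi hj
  obtain ⟨t, h0, ht, hstep⟩ := exists_time hSp hx (-(i : ℤ))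
  have hmono : StrictMono t := strictMono_int_of_lt_succ fun k => by
    have := hp1 ((T ^ t k) x)
    have := hstep k
    lia
  obtain ⟨k, hk⟩ : (T ^ (-(j : ℤ))) x ∈ zOrbit S ((T ^ (-(i : ℤ))) x) := by
    dsimp only at hij
    rw [hij]
    exact mem_zOrbit_self _ _
  have htk : t k = -(j : ℤ) := hx ((ht k).symm.trans hk)
  have hs0 := hstep 0
  have hsk := hstep k
  rw [h0] at hs0
  rw [htk] at hsk
  rcases lt_trichotomy k 0 with h | rfl | h
  · have := hmono.monotone (show k + 1 ≤ 0 by lia)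
    lia
  · lia
  · have := hmono.monotone (show 0 + 1 ≤ k by lia)
    lia

lemma ncard_orbits {T S : Equiv.Perm X} {p : X → ℕ} {M : ℕ}
    (hSp : ∀ x, S x = (T ^ p x) x) (hp1 : ∀ x, 1 ≤ p x) (hM : ∀ x, p x ≤ M) {x : X}
    (hx : Function.Injective fun n : ℤ => (T ^ n) x) :
    {O : Set X | (∃ y : X, O = zOrbit S y) ∧ O ⊆ zOrbit T x}.ncard =
      (crossings T p M x).card := by
  rw [setOf_orbits_eq_image hSp hp1 hM hx, (injOn_crossings hSp hp1 hx).ncard_image,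
    Set.ncard_coe_finset]

lemma crossings_nonempty {T S : Equiv.Perm X} {p : X → ℕ} {M : ℕ}
    (hSp : ∀ x, S x = (T ^ p x) x) (hp1 : ∀ x, 1 ≤ p x) (hM : ∀ x, p x ≤ M) {x : X}
    (hx : Function.Injective fun n : ℤ => (T ^ n) x) : (crossings T p M x).Nonempty := by
  have hmem : zOrbit S x ∈ {O : Set X | (∃ y : X, O = zOrbit S y) ∧ O ⊆ zOrbit T x} := by
    refine ⟨⟨x, rfl⟩, ?_⟩
    rintro _ ⟨k, rfl⟩
    obtain ⟨t, -, ht, -⟩ := exists_time hSp hx 0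
    exact ⟨t k, by simpa using (ht k).symm⟩
  rw [setOf_orbits_eq_image hSp hp1 hM hx] at hmem
  obtain ⟨j, hj, -⟩ := hmem
  exact ⟨j, hj⟩

/-- The jump function of a bounded speedup of a free system is continuous. -/
lemma continuous_jump [TopologicalSpace X] [T2Space X] {T S : Equiv.Perm X} {p : X → ℕ} {M : ℕ}
    (hT : Continuous T) (hS : Continuous S)
    (hSp : ∀ x, S x = (T ^ p x) x) (hM : ∀ x, p x ≤ M)
    (hfree : ∀ x, Function.Injective fun n : ℤ => (T ^ n) x) : Continuous p := by
  rw [continuous_iff_isClosed]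
  intro s _
  have hpre : p ⁻¹' s = ⋃ k ∈ s ∩ Set.Iic M, {x | S x = (T ^ k) x} := by
    ext x
    simp only [Set.mem_preimage, Set.mem_iUnion, Set.mem_ofPred_eq, exists_prop]
    constructor
    · exact fun h => ⟨p x, ⟨h, hM x⟩, hSp x⟩
    · rintro ⟨k, ⟨hk, -⟩, h⟩
      have hkp : ((p x : ℕ) : ℤ) = (k : ℤ) := hfree x (by simpa using (hSp x).symm.trans h)
      rwa [Int.natCast_inj.1 hkp]
  rw [hpre]
  refine ((Set.finite_Iic M).inter_of_right s).isClosed_biUnion fun k _ => isClosed_eq hS ?_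
  rw [Equiv.Perm.coe_pow]
  exact hT.iterate k

lemma continuous_card_crossings [TopologicalSpace X] {T : Equiv.Perm X} {p : X → ℕ}
    (hT : Continuous T.symm) (hp : Continuous p) (M : ℕ) :
    Continuous fun x => (crossings T p M x).card := by
  simp only [crossings, Finset.card_filter]
  refine continuous_finsetSum _ fun j _ => ?_
  have hj : Continuous fun x => (T ^ (-(j : ℤ))) x := by
    rw [zpow_neg, zpow_natCast, ← inv_pow, Equiv.Perm.coe_pow]
    exact hT.iterate j
  exact (continuous_of_discreteTopology (f := fun q : ℕ => if j ≤ q then 1 else 0)).comp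
    (hp.comp hj)

end BoundedSpeedup

open BoundedSpeedup

/-- If `S` is a bounded speedup of a minimal Cantor system `(X,T)`, then
there is a positive integer `c` such that for every `x`, the set of `S`-orbits contained in
the `T`-orbit of `x` has cardinality exactly `c`. -/
theorem boundedSpeedup_orbit_number
    {X : Type*} [TopologicalSpace X] [CompactSpace X]
    [TopologicalSpace.MetrizableSpace X] [TotallyDisconnectedSpace X] [PerfectSpace X]
    [Nonempty X]
    (T : Equiv.Perm X) (hTc : Continuous T) (hTc' : Continuous T.symm)
    (hTmin : IsMinimalHomeo T)
    (p : X → ℕ) (hp1 : ∀ x, 1 ≤ p x) (hpbdd : ∃ M : ℕ, ∀ x, p x ≤ M)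
    (S : Equiv.Perm X) (hSc : Continuous S) (hSc' : Continuous S.symm)
    (hSp : ∀ x, S x = (T ^ p x) x) :
    ∃ c : ℕ, 0 < c ∧ ∀ x : X,
      {O : Set X | (∃ y : X, O = zOrbit S y) ∧ O ⊆ zOrbit T x}.ncard = c := by
  obtain ⟨M, hM⟩ := hpbdd
  have hfree := zpow_apply_injective hTmin
  have hp : Continuous p := continuous_jump hTc hSc hSp hM hfree
  obtain ⟨x₀⟩ := ‹Nonempty X›
  refine ⟨(crossings T p M x₀).card, (crossings_nonempty hSp hp1 hM (hfree x₀)).card_pos,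
    fun x => ?_⟩
  rw [ncard_orbits hSp hp1 hM (hfree x)]
  refine congrFun (Continuous.ext_on (hTmin x₀) (continuous_card_crossings hTc' hp M)
    continuous_const ?_) x
  rintro _ ⟨n, rfl⟩
  dsimp only
  rw [← ncard_orbits hSp hp1 hM (hfree _), ← ncard_orbits hSp hp1 hM (hfree _), zOrbit_zpow]
end

section
/- Let (X,T) be a minimal Cantor system and let S be a bounded speedup of T with jump function p and orbit number c. Then there exists a continuous function f : X → ℤ such that p(x) = c + f(x) − f(T(x)) for all x ∈ X; that is, p − c is a T-coboundary. -/
/-- `c` is the orbit number of the speedup `S` of `T`: every `T`-orbit is the union of exactly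
`c` distinct `S`-orbits. -/
def IsOrbitNumber {X : Type*} (T S : Equiv.Perm X) (c : ℕ) : Prop :=
  0 < c ∧ ∀ x : X,
    {O : Set X | (∃ y : X, O = zOrbit S y) ∧ O ⊆ zOrbit T x}.ncard = c

/-- A minimal bijection of a perfect `T₁` space acts freely. -/
theorem IsMinimalHomeo.zpow_apply_injective {X : Type*} [TopologicalSpace X] [T1Space X]
    [PerfectSpace X] {T : Equiv.Perm X} (hT : IsMinimalHomeo T) (x : X) :
    Function.Injective fun n : ℤ => (T ^ n) x := by
  intro m n hmn
  by_contra hne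
  have hd : n - m ≠ 0 := fun h => hne (by omega)
  have hfix : (T ^ (n - m)) x = x := by
    have h : (T ^ m) x = (T ^ n) x := hmn
    rw [show n - m = -m + n by ring, zpow_add, Equiv.Perm.mul_apply, ← h,
      ← Equiv.Perm.mul_apply, ← zpow_add]
    simp
  have hfin : (Set.range fun k : ℤ => (T ^ k) x).Finite := by
    refine ((Set.finite_Ico (0 : ℤ) |n - m|).image fun k : ℤ => (T ^ k) x).subset ?_
    rintro _ ⟨k, rfl⟩
    refine ⟨k % (n - m), ⟨Int.emod_nonneg _ hd, Int.emod_lt_abs _ hd⟩, ?_⟩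
    have hq := Equiv.Perm.zpow_apply_eq_self_of_apply_eq_self hfix (k / (n - m))
    rw [← zpow_mul] at hq
    change (T ^ (k % (n - m))) x = (T ^ k) x
    conv_rhs => rw [← Int.emod_add_mul_ediv k (n - m), zpow_add, Equiv.Perm.mul_apply, hq]
  have huniv : (Set.univ : Set X).Finite := by
    rw [← (hT x).closure_eq, hfin.isClosed.closure_eq]
    exact hfin
  exact infinite_of_mem_nhds x Filter.univ_mem huniv

/-- A bounded `ℕ`-valued function with closed fibres is continuous. -/
theorem continuous_nat_of_isClosed_fiber {X : Type*} [TopologicalSpace X] {p : X → ℕ} {M : ℕ}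
    (hM : ∀ x, p x ≤ M) (hp : ∀ k, IsClosed {x | p x = k}) : Continuous p := by
  rw [continuous_iff_isClosed]
  intro s _
  have h : p ⁻¹' s = ⋃ k ∈ s ∩ Set.Iic M, {x | p x = k} := by
    ext x
    simp [hM x]
  rw [h]
  exact ((Set.finite_Iic M).inter_of_right s).isClosed_biUnion fun k _ => hp k

/-- A strictly increasing integer sequence crosses `0`. -/
theorem StrictMono.exists_neg_and_nonneg {a : ℤ → ℤ} (ha : StrictMono a) :
    ∃ k, a k < 0 ∧ 0 ≤ a (k + 1) := by
  have hgrow : ∀ i : ℕ, a 0 + i ≤ a i ∧ a (-i) ≤ a 0 - i := by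
    intro i
    induction i with
    | zero => simp
    | succ i ih =>
      have h₁ : a i < a (i + 1) := ha (by omega)
      have h₂ : a (-(i + 1)) < a (-i) := ha (by omega)
      push_cast
      omega
  obtain ⟨k, hk, hmax⟩ := Int.exists_greatest_of_bdd (P := fun k => a k < 0)
    ⟨(a 0).natAbs, fun z hz => by
      have h := (hgrow (a 0).natAbs).1
      exact (ha.lt_iff_lt.1 (show a z < a (a 0).natAbs by omega)).le⟩
    ⟨-((a 0).natAbs + 1 : ℕ), by
      have h := (hgrow ((a 0).natAbs + 1)).2
      omega⟩
  refine ⟨k, hk, ?_⟩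
  by_contra h
  have := hmax (k + 1) (not_le.1 h)
  omega

section Speedup

variable {X : Type*} {T S : Equiv.Perm X} {p : X → ℕ}

/-- The positions in the `T`-orbit of `x` visited by the `S`-orbit of `(T ^ n) x`. -/
theorem exists_orbit_positions (hSp : ∀ x, S x = (T ^ p x) x) {x : X}
    (hinj : Function.Injective fun n : ℤ => (T ^ n) x) (n : ℤ) :
    ∃ a : ℤ → ℤ, a 0 = n ∧ (∀ k, (S ^ k) ((T ^ n) x) = (T ^ a k) x) ∧
      ∀ k, a (k + 1) = a k + p ((T ^ a k) x) := by
  have hS : ∀ m : ℤ, S ((T ^ m) x) = (T ^ (m + p ((T ^ m) x))) x := by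
    intro m
    rw [hSp, add_comm, zpow_add, Equiv.Perm.mul_apply, zpow_natCast]
  have hSinv : ∀ y, ∃ m : ℤ, S⁻¹ y = (T ^ m) y := by
    intro y
    refine ⟨-(p (S⁻¹ y) : ℤ), ?_⟩
    have h : (T ^ (p (S⁻¹ y) : ℤ)) (S⁻¹ y) = y := by
      rw [zpow_natCast, ← hSp]
      exact S.apply_symm_apply y
    rw [zpow_neg, Equiv.Perm.eq_inv_iff_eq, h]
  have hex : ∀ k : ℤ, ∃ m : ℤ, (S ^ k) ((T ^ n) x) = (T ^ m) x := by
    intro k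
    induction k with
    | zero => exact ⟨n, by simp⟩
    | succ i ih =>
      obtain ⟨m, hm⟩ := ih
      refine ⟨m + p ((T ^ m) x), ?_⟩
      rw [add_comm, zpow_add, Equiv.Perm.mul_apply, hm, zpow_one, hS]
    | pred i ih =>
      obtain ⟨m, hm⟩ := ih
      obtain ⟨l, hl⟩ := hSinv ((T ^ m) x)
      refine ⟨l + m, ?_⟩
      rw [sub_eq_neg_add, zpow_add, Equiv.Perm.mul_apply, hm, zpow_neg_one, hl, zpow_add,
        Equiv.Perm.mul_apply]
  choose a ha using hex
  refine ⟨a, hinj ?_, ha, fun k => hinj ?_⟩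
  · change (T ^ a 0) x = (T ^ n) x
    rw [← ha]
    simp
  · change (T ^ a (k + 1)) x = (T ^ (a k + p ((T ^ a k) x))) x
    rw [← ha, ← hS, ← ha, add_comm, zpow_add, Equiv.Perm.mul_apply, zpow_one]

/-- The number of `S`-orbits in a `T`-orbit counts the jumps over a fixed position. -/
theorem card_jumps_eq_of_isOrbitNumber {c M : ℕ} (hp1 : ∀ x, 1 ≤ p x) (hM : ∀ x, p x ≤ M)
    (hSp : ∀ x, S x = (T ^ p x) x) (hc : IsOrbitNumber T S c) {x : X}
    (hinj : Function.Injective fun n : ℤ => (T ^ n) x) :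
    ((Finset.range M).filter fun m : ℕ => m + 1 ≤ p ((T ^ (-(m + 1 : ℤ))) x)).card = c := by
  rw [← hc.2 x, ← Set.ncard_coe_finset]
  have hmono : ∀ a : ℤ → ℤ, (∀ k, a (k + 1) = a k + p ((T ^ a k) x)) → StrictMono a := by
    intro a ha
    refine strictMono_int_of_lt_succ fun k => ?_
    have := hp1 ((T ^ a k) x)
    rw [ha]
    omega
  refine Set.ncard_congr (fun m _ => zOrbit S ((T ^ (-(m + 1 : ℤ))) x)) ?_ ?_ ?_
  · intro m _
    refine ⟨⟨_, rfl⟩, ?_⟩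
    obtain ⟨a, -, ha, -⟩ := exists_orbit_positions hSp hinj (-(m + 1 : ℤ))
    rintro _ ⟨k, rfl⟩
    exact ⟨a k, (ha k).symm⟩
  · intro m m' hm hm' heq
    simp only [Finset.coe_filter, Finset.mem_range, Set.mem_ofPred_eq] at hm hm'
    obtain ⟨a, ha0, ha, hstep⟩ := exists_orbit_positions hSp hinj (-(m + 1 : ℤ))
    have hmem : (T ^ (-(m' + 1 : ℤ))) x ∈ zOrbit S ((T ^ (-(m + 1 : ℤ))) x) := by
      have heq' : zOrbit S ((T ^ (-(m + 1 : ℤ))) x) = zOrbit S ((T ^ (-(m' + 1 : ℤ))) x) := heq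
      rw [heq']
      exact ⟨0, by simp⟩
    obtain ⟨k, hk⟩ := hmem
    have hak : a k = -(m' + 1 : ℤ) := hinj ((ha k).symm.trans hk)
    have h₀ := hstep 0
    have h₁ := hstep k
    rw [ha0] at h₀
    rw [hak] at h₁
    have hle := (hmono a hstep).monotone
    rcases lt_trichotomy k 0 with hlt | rfl | hgt
    · have := hle (show k + 1 ≤ 0 by omega)
      omega
    · omega
    · have := hle (show 0 + 1 ≤ k by omega)
      omega
  · rintro _ ⟨⟨y, rfl⟩, hsub⟩
    obtain ⟨n, hn⟩ : y ∈ zOrbit T x := hsub ⟨0, by simp⟩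
    replace hn : (T ^ n) x = y := hn
    obtain ⟨a, -, ha, hstep⟩ := exists_orbit_positions hSp hinj n
    obtain ⟨k, hneg, hnonneg⟩ := (hmono a hstep).exists_neg_and_nonneg
    have hcast : -(((-a k - 1).toNat : ℤ) + 1) = a k := by omega
    have hle := hM ((T ^ a k) x)
    rw [hstep] at hnonneg
    refine ⟨(-a k - 1).toNat, ?_, ?_⟩
    · simp only [Finset.coe_filter, Finset.mem_range, Set.mem_ofPred_eq, hcast]
      omega
    · simp only [hcast]
      rw [← ha, hn]
      ext z
      constructor
      · rintro ⟨i, rfl⟩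
        exact ⟨i + k, by simp [zpow_add]⟩
      · rintro ⟨i, rfl⟩
        refine ⟨i - k, ?_⟩
        change (S ^ (i - k)) ((S ^ k) y) = (S ^ i) y
        rw [← Equiv.Perm.mul_apply, ← zpow_add, sub_add_cancel]

end Speedup

/-- If `S` is a bounded speedup of a minimal Cantor system `(X,T)` with jump
function `p` and orbit number `c`, then `p - c` is a `T`-coboundary: there is a continuous
`f : X → ℤ` with `p x = c + f x - f (T x)` for all `x`. -/
theorem boundedSpeedup_jump_eq_const_add_coboundary
    {X : Type*} [TopologicalSpace X] [CompactSpace X]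
    [TopologicalSpace.MetrizableSpace X] [TotallyDisconnectedSpace X] [PerfectSpace X]
    [Nonempty X]
    (T : Equiv.Perm X) (hTc : Continuous T) (hTc' : Continuous T.symm)
    (hTmin : IsMinimalHomeo T)
    (p : X → ℕ) (hp1 : ∀ x, 1 ≤ p x) (hpbdd : ∃ M : ℕ, ∀ x, p x ≤ M)
    (S : Equiv.Perm X) (hSc : Continuous S) (hSc' : Continuous S.symm)
    (hSp : ∀ x, S x = (T ^ p x) x)
    (c : ℕ) (hc : IsOrbitNumber T S c) :
    ∃ f : X → ℤ, Continuous f ∧ ∀ x : X, (p x : ℤ) = c + f x - f (T x) := by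
  obtain ⟨M, hM⟩ := hpbdd
  have hfree := hTmin.zpow_apply_injective
  have hTpow : ∀ k : ℕ, Continuous ⇑(T ^ k) := by
    intro k
    rw [Equiv.Perm.coe_pow]
    exact hTc.iterate k
  have hTinv : ∀ k : ℕ, Continuous ⇑(T ^ (-(k + 1 : ℤ))) := by
    intro k
    have h : T ^ (-(k + 1 : ℤ)) = T.symm ^ (k + 1) := by
      rw [zpow_neg, ← inv_zpow]
      exact zpow_natCast T⁻¹ (k + 1)
    rw [h, Equiv.Perm.coe_pow]
    exact hTc'.iterate _
  have hp : Continuous p := by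
    refine continuous_nat_of_isClosed_fiber hM fun k => ?_
    have h : {x | p x = k} = {x | S x = (T ^ k) x} := by
      ext x
      refine ⟨fun hx => by rw [Set.mem_ofPred_eq, hSp, show p x = k from hx], fun hx => ?_⟩
      have hx' : (T ^ (p x : ℤ)) x = (T ^ (k : ℤ)) x := by
        rw [zpow_natCast, zpow_natCast, ← hSp]
        exact hx
      exact_mod_cast hfree x hx'
    rw [h]
    exact isClosed_eq hSc (hTpow k)
  refine ⟨fun x => -∑ m ∈ Finset.range M, ((p ((T ^ (-(m + 1 : ℤ))) x) - m : ℕ) : ℤ), ?_, ?_⟩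
  · refine (continuous_finsetSum _ fun m _ => ?_).neg
    exact (continuous_of_discreteTopology (f := fun k : ℕ => ((k - m : ℕ) : ℤ))).comp
      (hp.comp (hTinv m))
  · intro x
    have hcard := card_jumps_eq_of_isOrbitNumber hp1 hM hSp hc (hfree x)
    rw [Finset.card_filter] at hcard
    let q : ℕ → ℤ := fun m => ((p ((T ^ (-m : ℤ)) x) - m : ℕ) : ℤ)
    have hshift : ∀ m : ℕ, ((p ((T ^ (-(m + 1 : ℤ))) (T x)) - m : ℕ) : ℤ) = q m := by
      intro m
      simp only [q]
      rw [show (-m : ℤ) = -(m + 1 : ℤ) + 1 by ring, zpow_add_one, Equiv.Perm.mul_apply]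
    have htelescope : ∑ m ∈ Finset.range M, (q m - q (m + 1)) = p x := by
      rw [Finset.sum_range_sub']
      have hx : (T ^ (-((0 : ℕ) : ℤ))) x = x := by
        rw [Nat.cast_zero, neg_zero, zpow_zero, Equiv.Perm.one_apply]
      simp only [q]
      rw [hx, Nat.sub_eq_zero_of_le (hM _), Nat.sub_zero, Nat.cast_zero, sub_zero]
    have hterm : ∀ m : ℕ, ((p ((T ^ (-(m + 1 : ℤ))) x) - m : ℕ) : ℤ) =
        q (m + 1) + ((if m + 1 ≤ p ((T ^ (-(m + 1 : ℤ))) x) then 1 else 0 : ℕ) : ℤ) := by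
      intro m
      simp only [q, Nat.cast_add, Nat.cast_one]
      split_ifs <;> omega
    simp only [hshift, hterm]
    rw [← htelescope, ← hcard, Finset.sum_add_distrib, Finset.sum_sub_distrib]
    push_cast
    ring
end

section
/- Let (X,T) be a minimal Cantor system and let S be a bounded speedup of T with jump function p, and suppose S is minimal. Suppose there are a positive integer c and a continuous function g : X → ℤ such that p(x) = c + g(S(x)) − g(x) for all x ∈ X. Define h : X → X by h(x) = T^{−g(x)}(x). Then h is continuous, h∘S = T^c∘h, the image h(X) is invariant under T^c, and T^c restricted to h(X) is a minimal Cantor system, so h is a factor map from (X,S) onto (h(X), T^c). Furthermore, if T^c : X → X is itself minimal, then h is a homeomorphism of X and is a topological conjugacy from (X,S) to (X,T^c). -/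
/-- A surjective self-map of `ℤ` with bounded displacement that semiconjugates an injective map
to a translation by `c > 0` is injective. -/
theorem Int.injective_of_bounded_displacement {f σ : ℤ → ℤ} {B : ℤ} {c : ℕ} (hc : 0 < c)
    (hf : Function.Surjective f) (hB : ∀ n, |f n - n| ≤ B) (hσ : Function.Injective σ)
    (hfσ : ∀ n, f (σ n) = f n + c) : Function.Injective f := by
  intro a b hab
  by_contra hne
  obtain ⟨s, hs⟩ := hf.hasRightInverse
  have hiter : ∀ (n : ℕ) (m : ℤ), f (σ^[n] m) = f m + c * n := by
    intro n
    induction n with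
    | zero => simp
    | succ n ih => intro m; rw [Function.iterate_succ_apply, ih, hfσ]; push_cast; ring
  have hdouble : ∀ n : ℕ, ∃ t, f t = f a + c * n ∧ t ≠ s (f a + c * n) := by
    intro n
    by_cases hn : σ^[n] a = s (f a + c * n)
    · exact ⟨σ^[n] b, by rw [hiter, hab], fun hb => hne (hσ.iterate n (hn.trans hb.symm))⟩
    · exact ⟨σ^[n] a, hiter n a, hn⟩
  choose t ht hts using hdouble
  have hB0 : 0 ≤ B := (abs_nonneg _).trans (hB 0)
  obtain ⟨b', rfl⟩ := Int.eq_ofNat_of_zero_le hB0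
  set N : ℕ := 2 * b' with hN
  have hcard := Finset.card_le_card_of_injOn
    (s := (Finset.Icc (f a) (f a + c * N)).disjSum (Finset.range (N + 1)))
    (t := Finset.Icc (f a - b') (f a + c * N + b')) (Sum.elim s t)
    (by
      rintro (m | n) hm
      · have h1 := abs_le.1 (hB (s m))
        rw [hs m] at h1
        simp at hm ⊢
        constructor <;> linarith [h1.1, h1.2, hm.1, hm.2]
      · have h1 := abs_le.1 (hB (t n))
        rw [ht n] at h1
        simp at hm
        have h2 : (c : ℤ) * n ≤ c * N := by
          gcongr
        have h3 : (0 : ℤ) ≤ c * n := by positivity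
        simp
        constructor <;> linarith [h1.1, h1.2])
    (by
      rintro (m | n) - (m' | n') - he <;> simp only [Sum.elim_inl, Sum.elim_inr] at he
      · exact congrArg Sum.inl (hs.injective he)
      · have := congrArg f he
        rw [hs, ht] at this
        exact absurd (this ▸ he).symm (hts n')
      · have := congrArg f he
        rw [hs, ht] at this
        exact absurd (this ▸ he) (hts n)
      · have := congrArg f he
        rw [ht, ht] at this
        have hc' : (c : ℤ) ≠ 0 := by positivity
        have h4 := mul_left_cancel₀ hc' (add_left_cancel this)
        exact congrArg Sum.inr (by exact_mod_cast h4))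
  rw [Finset.card_disjSum, Int.card_Icc, Int.card_Icc, Finset.card_range] at hcard
  have hpos : (0 : ℤ) ≤ c * N := by positivity
  generalize (c : ℤ) * N = K at hcard hpos
  omega

theorem Equiv.Perm.continuous_zpow {X : Type*} [TopologicalSpace X] {T : Equiv.Perm X}
    (hT : Continuous T) (hT' : Continuous T.symm) (n : ℤ) : Continuous ⇑(T ^ n) := by
  cases n with
  | ofNat n => simpa [Equiv.Perm.coe_pow] using hT.iterate n
  | negSucc n =>
    rw [zpow_negSucc, ← inv_pow, Equiv.Perm.coe_pow]
    exact Continuous.iterate hT' _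

/-- Let `S` be a minimal bounded speedup of a minimal Cantor system `(X,T)`
with jump function `p`, and suppose `p x = c + g (S x) - g x` for a positive integer `c` and a
continuous `g : X → ℤ`.  Then `h x := T^(-g x) x` is continuous, `h ∘ S = T^c ∘ h`, the image
of `h` is `T^c`-invariant, `T^c` restricted to `h(X)` is minimal (every orbit is dense in
`h(X)`), and if moreover `T^c` is minimal on all of `X`, then `h` is a bijection giving a
topological conjugacy from `(X,S)` to `(X,T^c)`. -/
theorem boundedSpeedup_S_coboundary_factor
    {X : Type*} [TopologicalSpace X] [CompactSpace X]
    [TopologicalSpace.MetrizableSpace X] [TotallyDisconnectedSpace X] [PerfectSpace X]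
    [Nonempty X]
    (T : Equiv.Perm X) (hTc : Continuous T) (hTc' : Continuous T.symm)
    (hTmin : IsMinimalHomeo T)
    (p : X → ℕ) (hp1 : ∀ x, 1 ≤ p x) (hpbdd : ∃ M : ℕ, ∀ x, p x ≤ M)
    (S : Equiv.Perm X) (hSc : Continuous S) (hSc' : Continuous S.symm)
    (hSp : ∀ x, S x = (T ^ p x) x) (hSmin : IsMinimalHomeo S)
    (c : ℕ) (hcpos : 0 < c)
    (g : X → ℤ) (hg : Continuous g)
    (hpg : ∀ x, (p x : ℤ) = c + g (S x) - g x)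
    (h : X → X) (hdef : ∀ x, h x = (T ^ (-(g x))) x) :
    Continuous h ∧
    (∀ x, h (S x) = (T ^ c) (h x)) ∧
    (⇑(T ^ c)) '' Set.range h = Set.range h ∧
    (∀ y ∈ Set.range h,
      Set.range h ⊆ closure (Set.range fun n : ℤ => ((T ^ c) ^ n) y)) ∧
    (IsMinimalHomeo (T ^ c) →
      Function.Bijective h ∧
        ∃ φ : X ≃ₜ X, (∀ x, φ x = h x) ∧ ∀ x, φ (S x) = (T ^ c) (φ x)) := by
  have hTz := Equiv.Perm.continuous_zpow hTc hTc'
  have hcont : Continuous h := by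
    rw [continuous_iff_continuousAt]
    intro x
    have hloc : ∀ᶠ y in nhds x, g y = g x :=
      hg.continuousAt.eventually (IsOpen.mem_nhds (isOpen_discrete {g x}) rfl)
    refine (hTz (-(g x))).continuousAt.congr ?_
    filter_upwards [hloc] with y hy
    rw [hdef, hy]
  have hsemi : ∀ x, h (S x) = (T ^ c) (h x) := by
    intro x
    have he : (c : ℤ) + -g x = -g (S x) + p x := by rw [hpg]; ring
    rw [hdef, hdef, ← zpow_natCast T c, ← Equiv.Perm.mul_apply (T ^ (c : ℤ)), ← zpow_add]
    rw [he, zpow_add, Equiv.Perm.mul_apply, zpow_natCast, ← hSp]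
  have himage : ⇑(T ^ c) '' Set.range h = Set.range h := by
    rw [← Set.range_comp, ← S.surjective.range_comp h]
    exact congrArg Set.range (funext fun x => (hsemi x).symm)
  have hsemi_zpow : ∀ (n : ℤ) (x : X), h ((S ^ n) x) = ((T ^ c) ^ n) (h x) := by
    intro n
    induction n with
    | zero => simp
    | succ n ih =>
      intro x
      rw [zpow_add_one, zpow_add_one, Equiv.Perm.mul_apply, ih, hsemi, Equiv.Perm.mul_apply]
    | pred n ih =>
      intro x
      rw [zpow_sub_one, zpow_sub_one, Equiv.Perm.mul_apply, ih, Equiv.Perm.mul_apply]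
      congr 1
      rw [Equiv.Perm.eq_inv_iff_eq, ← hsemi, Equiv.Perm.inv_def, Equiv.apply_symm_apply]
  refine ⟨hcont, hsemi, himage, ?_, ?_⟩
  · rintro _ ⟨x, rfl⟩
    have hrange := hcont.range_subset_closure_image_dense (hSmin x)
    rw [← Set.range_comp] at hrange
    convert hrange using 4 with n
    exact (hsemi_zpow n x).symm
  · intro hmin
    have hsurj : Function.Surjective h := by
      obtain ⟨x⟩ := ‹Nonempty X›
      have hsub : (Set.range fun n : ℤ => ((T ^ c) ^ n) (h x)) ⊆ Set.range h := by
        rintro _ ⟨n, rfl⟩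
        exact ⟨_, hsemi_zpow n x⟩
      have hdense := (hmin (h x)).mono hsub
      exact Set.range_eq_univ.1
        ((isCompact_range hcont).isClosed.closure_eq ▸ hdense.closure_eq)
    obtain ⟨B, hB⟩ := (isCompact_range hg.abs).bddAbove
    have hinj : Function.Injective h := by
      intro x y hxy
      have hS : ∀ k : ℤ, (T ^ (k + p ((T ^ k) x))) x = S ((T ^ k) x) := by
        intro k
        rw [hSp, add_comm, zpow_add, Equiv.Perm.mul_apply, zpow_natCast]
      have hf : Function.Injective fun n : ℤ => n - g ((T ^ n) x) := by
        refine Int.injective_of_bounded_displacement (σ := fun n => n + p ((T ^ n) x))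
          (B := B) hcpos ?_ ?_ ?_ ?_
        · intro m
          obtain ⟨z, hz⟩ := hsurj ((T ^ m) x)
          have hzx : (T ^ (g z + m)) x = z := by
            rw [zpow_add, Equiv.Perm.mul_apply, ← hz, hdef, zpow_neg, Equiv.Perm.inv_def,
              Equiv.apply_symm_apply]
          exact ⟨g z + m, by simp only [hzx]; ring⟩
        · intro n
          simpa using hB ⟨(T ^ n) x, rfl⟩
        · intro m n hmn
          simp only at hmn
          have hpt : (T ^ m) x = (T ^ n) x := S.injective (by rw [← hS, ← hS, hmn])
          rw [hpt] at hmn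
          exact add_right_cancel hmn
        · intro n
          simp only [hS]
          linarith [hpg ((T ^ n) x)]
      have hy : (T ^ (g y - g x)) x = y := by
        rw [sub_eq_add_neg, zpow_add, Equiv.Perm.mul_apply, ← hdef, hxy, hdef, zpow_neg,
          Equiv.Perm.inv_def, Equiv.apply_symm_apply]
      have hk : g y - g x = 0 := hf (by simp only [hy]; simp)
      simpa [hk] using hy
    exact ⟨⟨hinj, hsurj⟩,
      hcont.homeoOfEquivCompactToT2 (f := Equiv.ofBijective h ⟨hinj, hsurj⟩),
      fun _ => rfl, hsemi⟩
end

section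
/- Let (X,T) be a minimal Cantor system and let S be a bounded speedup of T with jump function p, and suppose S is minimal. Then h(S) ≤ (sup{∫ p dμ : μ ∈ M(X,S)})·h(T), where h denotes topological entropy. -/
open MeasureTheory

open Filter Topology Dynamics BoundedContinuousFunction
open scoped Uniformity

/-- The empirical measure of an orbit segment of length `n` integrates functions to their Birkhoff
averages. -/
lemma exists_probabilityMeasure_integral_eq_birkhoffAverage {X : Type*} [TopologicalSpace X]
    [MeasurableSpace X] [BorelSpace X] (S : X → X) {n : ℕ} (hn : n ≠ 0) (x : X) :
    ∃ ν : ProbabilityMeasure X, ∀ f : X →ᵇ ℝ,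
      ∫ y, f y ∂(ν : Measure X) = birkhoffAverage ℝ S f n x := by
  have hprob : IsProbabilityMeasure
      ((n : ENNReal)⁻¹ • ∑ i ∈ Finset.range n, Measure.dirac (S^[i] x)) := by
    constructor
    simp only [Measure.smul_apply, Measure.finsetSum_apply, measure_univ, Finset.sum_const,
      Finset.card_range, nsmul_eq_mul, mul_one, smul_eq_mul]
    exact ENNReal.inv_mul_cancel (by exact_mod_cast hn) (ENNReal.natCast_ne_top n)
  refine ⟨⟨_, hprob⟩, fun f ↦ ?_⟩
  rw [ProbabilityMeasure.coe_mk, integral_smul_measure,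
    integral_finsetSum_measure fun i _ ↦ f.integrable _]
  simp [birkhoffAverage, birkhoffSum, integral_dirac' _ _ f.continuous.stronglyMeasurable]

/-- If a continuous function has integral at most `c` against every invariant probability measure,
then its Birkhoff averages are eventually uniformly at most `c + ε`. -/
lemma eventually_forall_birkhoffAverage_le {X : Type*} [MetricSpace X] [CompactSpace X]
    [MeasurableSpace X] [BorelSpace X] {S : X → X} (hS : Continuous S) (f : X →ᵇ ℝ) {c : ℝ}
    (hc : ∀ μ : Measure X, IsProbabilityMeasure μ → MeasurePreserving S μ μ → ∫ y, f y ∂μ ≤ c)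
    {ε : ℝ} (hε : 0 < ε) :
    ∀ᶠ n : ℕ in atTop, ∀ x, birkhoffAverage ℝ S f n x ≤ c + ε := by
  by_contra hcon
  have hfreq : ∃ᶠ n : ℕ in atTop, n ≠ 0 ∧ ∃ x, c + ε < birkhoffAverage ℝ S f n x := by
    refine ((not_eventually.1 hcon).and_eventually (eventually_ne_atTop 0)).mono ?_
    rintro n ⟨h, hn⟩
    push Not at h
    exact ⟨hn, h⟩
  have hν : ∀ n : ℕ, (n ≠ 0 ∧ ∃ x, c + ε < birkhoffAverage ℝ S f n x) →
      ∃ (x : X) (ν : ProbabilityMeasure X), c + ε < birkhoffAverage ℝ S f n x ∧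
        ∀ g : X →ᵇ ℝ, ∫ y, g y ∂(ν : Measure X) = birkhoffAverage ℝ S g n x := by
    rintro n ⟨hn, x, hx⟩
    obtain ⟨ν, hν⟩ := exists_probabilityMeasure_integral_eq_birkhoffAverage S hn x
    exact ⟨x, ν, hx, hν⟩
  obtain ⟨n₀, hn₀⟩ := hfreq.exists
  obtain ⟨x₀, ν₀, -⟩ := hν n₀ hn₀
  have : Nonempty X := ⟨x₀⟩
  have : Nonempty (ProbabilityMeasure X) := ⟨ν₀⟩
  choose! x ν hx hν using hν
  have : NeBot (atTop ⊓ 𝓟 {n : ℕ | n ≠ 0 ∧ ∃ x, c + ε < birkhoffAverage ℝ S f n x}) :=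
    frequently_iff_neBot.1 hfreq
  set G : Ultrafilter ℕ :=
    Ultrafilter.of (atTop ⊓ 𝓟 {n : ℕ | n ≠ 0 ∧ ∃ x, c + ε < birkhoffAverage ℝ S f n x})
  have hG : (G : Filter ℕ) ≤ _ := Ultrafilter.of_le _
  have hGtop : (G : Filter ℕ) ≤ atTop := hG.trans inf_le_left
  have hGbad : ∀ᶠ n in (G : Filter ℕ), n ≠ 0 ∧ ∃ x, c + ε < birkhoffAverage ℝ S f n x :=
    le_principal_iff.1 (hG.trans inf_le_right)
  obtain ⟨μ, hμ⟩ : ∃ μ, Tendsto ν G (𝓝 μ) :=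
    ⟨_, (G.map ν).le_nhds_lim⟩
  rw [ProbabilityMeasure.tendsto_iff_forall_integral_tendsto] at hμ
  have hinv : MeasurePreserving S (μ : Measure X) μ := by
    refine ⟨hS.measurable, ?_⟩
    have : IsProbabilityMeasure (Measure.map S (μ : Measure X)) :=
      Measure.isProbabilityMeasure_map hS.measurable.aemeasurable
    refine ext_of_forall_integral_eq_of_IsFiniteMeasure fun g ↦ ?_
    rw [integral_map hS.measurable.aemeasurable g.continuous.aestronglyMeasurable]
    have h₁ := hμ (g.compContinuous ⟨S, hS⟩)
    have h₂ := hμ g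
    have h₃ : Tendsto (fun n : ℕ ↦ 2 * ‖g‖ / n) G (𝓝 0) :=
      (tendsto_const_div_atTop_nhds_zero_nat _).mono_left hGtop
    refine eq_of_sub_eq_zero (tendsto_nhds_unique (h₁.sub h₂) (squeeze_zero_norm' ?_ h₃))
    filter_upwards [hGbad] with n hn
    rw [hν n hn, hν n hn]
    have hshift : birkhoffAverage ℝ S (g.compContinuous ⟨S, hS⟩) n (x n) =
        birkhoffAverage ℝ S g n (S (x n)) := by
      simp [birkhoffAverage, birkhoffSum, ← Function.iterate_succ_apply',
        Function.iterate_succ_apply]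
    rw [hshift, ← dist_eq_norm, dist_birkhoffAverage_apply_birkhoffAverage]
    gcongr
    exact g.dist_le_two_norm _ _
  have hle : c + ε ≤ ∫ y, f y ∂(μ : Measure X) := by
    refine ge_of_tendsto (hμ f) ?_
    filter_upwards [hGbad] with n hn
    rw [hν n hn]
    exact (hx n hn).le
  linarith [hc μ inferInstance hinv]

section Speedup

variable {X : Type*} {S T : X → X} {p : X → ℕ}

lemma iterate_speedup (hS : ∀ x, S x = T^[p x] x) (n : ℕ) (x : X) :
    S^[n] x = T^[birkhoffSum S p n x] x := by
  induction n with
  | zero => simp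
  | succ n ih =>
    rw [Function.iterate_succ_apply', hS, birkhoffSum_succ, add_comm, Function.iterate_add_apply,
      ← ih]

lemma birkhoffSum_strictMono (hp : ∀ x, 1 ≤ p x) (x : X) :
    StrictMono fun n ↦ birkhoffSum S p n x :=
  strictMono_nat_of_lt_succ fun n ↦ by
    rw [birkhoffSum_succ]
    exact Nat.lt_add_of_pos_right (hp _)

/-- A `T`-orbit segment of length `N` controls an orbit segment of length `n` of the speedup when
the total jump is at most `N`. -/
lemma dynEntourage_subset_of_speedup (hS : ∀ x, S x = T^[p x] x) (hp : ∀ x, 1 ≤ p x)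
    {U V : SetRel X X} (hVU : V ⊆ U) (hV : ∀ x y, (x, y) ∈ V → p x = p y) {n N : ℕ}
    (hN : ∀ x, birkhoffSum S p n x ≤ N) :
    dynEntourage T V N ⊆ dynEntourage S U n := by
  rintro ⟨x, y⟩ hxy
  rw [mem_dynEntourage] at hxy ⊢
  have hlt : ∀ i < n, birkhoffSum S p i x < N := fun i hi ↦
    (birkhoffSum_strictMono hp x hi).trans_le (hN x)
  have heq : ∀ i ≤ n, birkhoffSum S p i x = birkhoffSum S p i y := by
    intro i
    induction i with
    | zero => simp
    | succ i ih =>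
      intro hi
      have h := ih (by lia)
      have hmem := hxy _ (hlt i hi)
      rw [birkhoffSum_succ, birkhoffSum_succ, h, iterate_speedup hS, iterate_speedup hS, ← h,
        hV _ _ hmem]
  intro k hk
  rw [iterate_speedup hS, iterate_speedup hS, ← heq k hk.le]
  exact hVU (hxy _ (hlt k hk))

lemma coverMincard_le_of_dynEntourage_subset {U V : SetRel X X} {n N : ℕ} (F : Set X)
    (h : dynEntourage T V N ⊆ dynEntourage S U n) :
    coverMincard S F U n ≤ coverMincard T F V N :=
  biInf_mono fun _ hs ↦ SetRel.IsCover.mono_entourage h hs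

lemma linearGrowthSup_natCeil_mul {d : ℝ} (hd : 0 < d) :
    LinearGrowth.linearGrowthSup (fun n : ℕ ↦ ((⌈d * n⌉₊ : ℕ) : EReal)) = d := by
  have h := (tendsto_nat_ceil_mul_div_atTop hd.le).comp tendsto_natCast_atTop_atTop
  refine Tendsto.limsup_eq ?_
  refine ((continuous_coe_real_ereal.tendsto d).comp h).congr fun n ↦ ?_
  simp [EReal.coe_div]

/-- If the Birkhoff averages of the jump function are eventually uniformly at most `d`, then the
entropy of the speedup is at most `d` times the entropy of the original map. -/
lemma coverEntropy_speedup_le [UniformSpace X] [Nonempty X] (hS : ∀ x, S x = T^[p x] x)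
    (hp : ∀ x, 1 ≤ p x) (hpu : {xy : X × X | p xy.1 = p xy.2} ∈ 𝓤 X) {d : ℝ} (hd : 0 < d)
    (hbd : ∀ᶠ n : ℕ in atTop, ∀ x, ((birkhoffSum S p n x : ℕ) : ℝ) ≤ d * n) :
    coverEntropy S Set.univ ≤ d * coverEntropy T Set.univ := by
  refine iSup₂_le fun U hU ↦ ?_
  set V : SetRel X X := U ∩ {xy : X × X | p xy.1 = p xy.2}
  have hV : V ∈ 𝓤 X := inter_mem hU hpu
  have hgrowth := linearGrowthSup_natCeil_mul hd
  have hmin (n : ℕ) : (1 : ENNReal) ≤ coverMincard T Set.univ V n := by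
    exact_mod_cast (one_le_coverMincard_iff T Set.univ V n).2 Set.univ_nonempty
  calc coverEntropyEntourage S Set.univ U
      ≤ ExpGrowth.expGrowthSup
          ((fun n : ℕ ↦ (coverMincard T Set.univ V n : ENNReal)) ∘ fun n : ℕ ↦ ⌈d * n⌉₊) := by
        refine ExpGrowth.expGrowthSup_eventually_monotone ?_
        filter_upwards [hbd] with n hn
        refine ENat.toENNReal_mono (coverMincard_le_of_dynEntourage_subset _ ?_)
        refine dynEntourage_subset_of_speedup hS hp Set.inter_subset_left
          (fun x y h ↦ h.2) fun x ↦ ?_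
        exact_mod_cast (hn x).trans (Nat.le_ceil _)
    _ ≤ d * coverEntropyEntourage T Set.univ V := by
        rw [← hgrowth]
        refine ExpGrowth.expGrowthSup_comp_le (Frequently.of_forall hmin) ?_ ?_ ?_
        · rw [hgrowth]; exact_mod_cast hd.ne'
        · rw [hgrowth]; exact EReal.coe_ne_top d
        · exact tendsto_nat_ceil_atTop.comp (tendsto_natCast_atTop_atTop.const_mul_atTop hd)
    _ ≤ d * coverEntropy T Set.univ :=
        mul_le_mul_of_nonneg_left (coverEntropyEntourage_le_coverEntropy T Set.univ hV)
          (by exact_mod_cast hd.le)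

end Speedup

/-- A minimal homeomorphism of an infinite space has no periodic points. -/
lemma IsMinimalHomeo.injective_pow_apply {X : Type*} [TopologicalSpace X] [T1Space X] [Infinite X]
    {T : Equiv.Perm X} (hT : IsMinimalHomeo T) (x : X) :
    Function.Injective fun n : ℕ ↦ (T ^ n) x := by
  have key : ∀ k : ℕ, 0 < k → (T ^ k) x ≠ x := by
    intro k hk hx
    have hfin : (Set.range fun n : ℤ ↦ (T ^ n) x).Finite := by
      refine ((Set.finite_Ico (0 : ℤ) k).image fun n : ℤ ↦ (T ^ n) x).subset ?_
      rintro _ ⟨n, rfl⟩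
      have hk' : (0 : ℤ) < k := by exact_mod_cast hk
      refine ⟨n % k, ⟨Int.emod_nonneg _ hk'.ne', Int.emod_lt_of_pos _ hk'⟩, ?_⟩
      conv_rhs => rw [← Int.emod_add_mul_ediv n k]
      beta_reduce
      rw [zpow_add, zpow_mul, zpow_natCast, Equiv.Perm.mul_apply,
        Equiv.Perm.zpow_apply_eq_self_of_apply_eq_self hx]
    have huniv := (hT x).closure_eq
    rw [hfin.isClosed.closure_eq] at huniv
    exact Set.infinite_univ (huniv ▸ hfin)
  refine Function.Injective.of_lt_imp_ne fun m n hmn h ↦ key (n - m) (by lia) ?_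
  have h' : (T ^ m) x = (T ^ m) ((T ^ (n - m)) x) := by
    rw [← Equiv.Perm.mul_apply, ← pow_add, Nat.add_sub_cancel' hmn.le]
    exact h
  exact ((T ^ m).injective h').symm

/-- The jump function of a bounded speedup of an aperiodic homeomorphism is locally constant. -/
lemma continuous_jump {X : Type*} [TopologicalSpace X] [T2Space X] {T S : Equiv.Perm X}
    (hT : Continuous T) (hS : Continuous S)
    (hinj : ∀ x, Function.Injective fun n : ℕ ↦ (T ^ n) x) {p : X → ℕ}
    (hpbdd : ∃ M : ℕ, ∀ x, p x ≤ M) (hSp : ∀ x, S x = (T ^ p x) x) :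
    Continuous p := by
  obtain ⟨M, hM⟩ := hpbdd
  have hpre (k : ℕ) : IsClosed (p ⁻¹' {k}) := by
    have : p ⁻¹' {k} = {x | S x = T^[k] x} := by
      ext x
      simp only [Set.mem_preimage, Set.mem_singleton_iff, Set.mem_ofPred_eq, hSp,
        Equiv.Perm.iterate_eq_pow]
      exact ⟨fun h ↦ by rw [h], fun h ↦ hinj x h⟩
    rw [this]
    exact isClosed_eq hS (hT.iterate k)
  refine continuous_iff_isClosed.2 fun s _ ↦ ?_
  have : p ⁻¹' s = ⋃ k ∈ s ∩ Set.Iic M, p ⁻¹' {k} := by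
    ext x
    simp [hM x]
  rw [this]
  exact ((Set.finite_Iic M).inter_of_right s).isClosed_biUnion fun k _ ↦ hpre k

/-- If `S` is a minimal bounded speedup of a minimal Cantor system `(X,T)`
with jump function `p`, then `h(S) ≤ (sup {∫ p dμ : μ ∈ M(X,S)}) · h(T)`, where `h` is
topological entropy. -/
theorem boundedSpeedup_entropy_upper_bound
    {X : Type*} [MetricSpace X] [CompactSpace X]
    [TotallyDisconnectedSpace X] [PerfectSpace X] [Nonempty X]
    [MeasurableSpace X] [BorelSpace X]
    (T : Equiv.Perm X) (hTc : Continuous T) (hTc' : Continuous T.symm)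
    (hTmin : IsMinimalHomeo T)
    (p : X → ℕ) (hp1 : ∀ x, 1 ≤ p x) (hpbdd : ∃ M : ℕ, ∀ x, p x ≤ M)
    (S : Equiv.Perm X) (hSc : Continuous S) (hSc' : Continuous S.symm)
    (hSp : ∀ x, S x = (T ^ p x) x) (hSmin : IsMinimalHomeo S) :
    Dynamics.coverEntropy (⇑S) Set.univ ≤
      ((sSup {r : ℝ | ∃ μ : Measure X, IsProbabilityMeasure μ ∧
          (∀ B : Set X, MeasurableSet B → μ (⇑S ⁻¹' B) = μ B) ∧
          r = ∫ y, (p y : ℝ) ∂μ} : ℝ) : EReal) *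
        Dynamics.coverEntropy (⇑T) Set.univ := by
  have : Infinite X := by
    obtain ⟨x⟩ := ‹Nonempty X›
    exact Set.infinite_univ_iff.1 (infinite_of_mem_nhds x univ_mem)
  have hpc : Continuous p := continuous_jump hTc hSc hTmin.injective_pow_apply hpbdd hSp
  have hpu : {xy : X × X | p xy.1 = p xy.2} ∈ 𝓤 X := by
    have h := CompactSpace.uniformContinuous_of_continuous hpc
    exact (discreteUniformity_iff_setRelId_mem_uniformity.1 inferInstance) |> h
  have hSit (x : X) : S x = T^[p x] x := by rw [hSp, Equiv.Perm.iterate_eq_pow]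
  set f : X →ᵇ ℝ := mkOfCompact ⟨fun x ↦ (p x : ℝ), by fun_prop⟩
  set c : ℝ := sSup {r : ℝ | ∃ μ : Measure X, IsProbabilityMeasure μ ∧
          (∀ B : Set X, MeasurableSet B → μ (⇑S ⁻¹' B) = μ B) ∧
          r = ∫ y, (p y : ℝ) ∂μ}
  have hc (μ : Measure X) (hμ : IsProbabilityMeasure μ) (hinv : MeasurePreserving S μ μ) :
      ∫ y, f y ∂μ ≤ c := by
    refine le_csSup ?_ ⟨μ, hμ, fun B hB ↦ hinv.measure_preimage hB.nullMeasurableSet, rfl⟩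
    refine ⟨‖f‖, ?_⟩
    rintro r ⟨ν, hν, -, rfl⟩
    exact (le_abs_self _).trans (f.norm_integral_le_norm ν)
  have hbd (ε : ℝ) (hε : 0 < ε) :
      ∀ᶠ n : ℕ in atTop, ∀ x, ((birkhoffSum S p n x : ℕ) : ℝ) ≤ (c + ε) * n := by
    filter_upwards [eventually_forall_birkhoffAverage_le hSc f hc hε, eventually_gt_atTop 0]
      with n hn hpos x
    have h := hn x
    rw [birkhoffAverage, smul_eq_mul, inv_mul_le_iff₀ (by exact_mod_cast hpos), mul_comm] at h
    refine le_trans (le_of_eq ?_) h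
    simp [birkhoffSum, f]
  have hc1 : 1 ≤ c := by
    refine le_of_forall_pos_le_add fun ε hε ↦ ?_
    obtain ⟨n, hn, hpos⟩ := ((hbd ε hε).and (eventually_gt_atTop 0)).exists
    obtain ⟨x⟩ := ‹Nonempty X›
    have h₁ : n ≤ birkhoffSum S p n x := (birkhoffSum_strictMono hp1 x).le_apply
    have h₂ : (1 : ℝ) * n ≤ (c + ε) * n := by
      rw [one_mul]
      exact le_trans (by exact_mod_cast h₁) (hn x)
    exact le_of_mul_le_mul_right h₂ (by exact_mod_cast hpos)
  have hle (ε : ℝ) (hε : 0 < ε) : coverEntropy S Set.univ ≤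
      ((c + ε : ℝ) : EReal) * coverEntropy T Set.univ :=
    coverEntropy_speedup_le hSit hp1 hpu (by linarith) (hbd ε hε)
  have hT0 : 0 ≤ coverEntropy T Set.univ := coverEntropy_nonneg T Set.univ_nonempty
  generalize coverEntropy T Set.univ = t at hle hT0 ⊢
  induction t with
  | bot => exact absurd hT0 (by simp)
  | top => rw [EReal.coe_mul_top_of_pos (by linarith)]; exact le_top
  | coe t =>
    have hlim : Tendsto (fun ε : ℝ ↦ (((c + ε) * t : ℝ) : EReal)) (𝓝[>] 0) (𝓝 ((c * t : ℝ))) := by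
      have hcont : Continuous fun ε : ℝ ↦ (((c + ε) * t : ℝ) : EReal) :=
        continuous_coe_real_ereal.comp (by fun_prop)
      simpa using (hcont.tendsto 0).mono_left nhdsWithin_le_nhds
    rw [← EReal.coe_mul]
    refine ge_of_tendsto hlim ?_
    filter_upwards [self_mem_nhdsWithin] with ε hε
    rw [EReal.coe_mul]
    exact hle ε hε
end

section
/- Let (X,T) be an odometer system and let S be a bounded speedup of T which is minimal. Then (X,S) is topologically conjugate to (X,T): there exists a homeomorphism φ : X → X such that φ∘S = T∘φ. -/
/-- Odometer data for `(X,T)`: nested cyclic Kakutani–Rokhlin partitions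
`P(k) = {T^i A(k) : 0 ≤ i < m k}` which refine each other and separate points. -/
def IsOdometerData {X : Type*} [TopologicalSpace X] (T : Equiv.Perm X)
    (m : ℕ → ℕ) (A : ℕ → Set X) : Prop :=
  (2 ≤ m 0) ∧ (∀ k, m k ∣ m (k + 1)) ∧ (∀ k, 2 * m k ≤ m (k + 1)) ∧
  (∀ k, (A k).Nonempty ∧ IsClopen (A k)) ∧
  (∀ k, ∀ i < m k, ∀ j < m k, i ≠ j →
    Disjoint ((⇑(T ^ i)) '' A k) ((⇑(T ^ j)) '' A k)) ∧
  (∀ k, (⋃ i < m k, (⇑(T ^ i)) '' A k) = Set.univ) ∧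
  (∀ k, (⇑(T ^ m k)) '' A k = A k) ∧
  (∀ k, ∀ i < m (k + 1), ∃ j < m k, (⇑(T ^ i)) '' A (k + 1) ⊆ (⇑(T ^ j)) '' A k) ∧
  (∀ x y : X, x ≠ y → ∃ k, ∀ i < m k,
    ¬(x ∈ (⇑(T ^ i)) '' A k ∧ y ∈ (⇑(T ^ i)) '' A k))

/-- A cyclic partition `{T^i A : 0 ≤ i < m}` is the family of fibres of a continuous factor map
onto rotation by `1` on `ZMod m`. -/
theorem exists_zmod_factor {X : Type*} [TopologicalSpace X] (T : Equiv.Perm X)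
    (hTc' : Continuous T.symm) (m : ℕ) (hm : 0 < m) (A : Set X)
    (hA : IsOpen A)
    (hdisj : ∀ i < m, ∀ j < m, i ≠ j → Disjoint ((⇑(T ^ i)) '' A) ((⇑(T ^ j)) '' A))
    (hcov : (⋃ i < m, (⇑(T ^ i)) '' A) = Set.univ) (hper : (⇑(T ^ m)) '' A = A) :
    ∃ f : X → ZMod m, Continuous f ∧ (∀ x, f (T x) = f x + 1) ∧
      ∀ x, ∀ i < m, x ∈ (⇑(T ^ i)) '' A ↔ f x = i := by
  have : NeZero m := ⟨hm.ne'⟩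
  have hex : ∀ x, ∃ i < m, x ∈ (⇑(T ^ i)) '' A := by
    intro x
    have hx : x ∈ ⋃ i < m, (⇑(T ^ i)) '' A := hcov ▸ Set.mem_univ x
    simpa only [Set.mem_iUnion, exists_prop] using hx
  choose c hcm hcA using hex
  have huniq : ∀ x, ∀ i < m, x ∈ (⇑(T ^ i)) '' A → c x = i := by
    intro x i hi hx
    by_contra hne
    exact Set.disjoint_left.1 (hdisj _ (hcm x) _ hi hne) (hcA x) hx
  have hiff : ∀ x, ∀ i < m, x ∈ (⇑(T ^ i)) '' A ↔ (c x : ZMod m) = i := by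
    refine fun x i hi => ⟨fun hx => by rw [huniq x i hi hx], fun h => ?_⟩
    rw [ZMod.natCast_eq_natCast_iff] at h
    rw [← Nat.ModEq.eq_of_lt_of_lt h (hcm x) hi]
    exact hcA x
  refine ⟨fun x => c x, ?_, fun x => ?_, hiff⟩
  · have hopen : ∀ i : ℕ, IsOpen ((⇑(T ^ i)) '' A) := by
      intro i
      have e : (⇑(T ^ i)) '' A = (⇑T.symm)^[i] ⁻¹' A := by
        rw [Equiv.image_eq_preimage_symm, Equiv.Perm.iterate_eq_pow, ← Equiv.Perm.inv_def,
          ← inv_pow, Equiv.Perm.inv_def]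
      rw [e]
      exact hA.preimage (hTc'.iterate i)
    refine continuous_discrete_rng.2 fun b => ?_
    convert hopen b.val using 1
    ext x
    rw [hiff x _ (ZMod.val_lt b), ZMod.natCast_zmod_val]
    rfl
  · beta_reduce
    obtain ⟨a, ha, hax⟩ := hcA x
    have hmem : T x ∈ (⇑(T ^ (c x + 1))) '' A :=
      ⟨a, ha, by rw [pow_succ', Equiv.Perm.mul_apply, hax]⟩
    rcases (Nat.succ_le_of_lt (hcm x)).lt_or_eq with h | h
    · rw [huniq _ _ h hmem]
      simp
    · rw [show c x + 1 = m from h, hper] at hmem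
      have h0 : c (T x) = 0 := huniq _ 0 hm (by simpa using hmem)
      rw [h0, ← Nat.cast_succ, h]
      simp

/-- A transitive permutation of a set of cardinality `m` is conjugate to rotation by `1` on
`ZMod m`. -/
theorem exists_equiv_zmod_of_transitive {α : Type*} [Finite α] (σ : Equiv.Perm α) (a : α)
    (h : ∀ b, ∃ n : ℤ, (σ ^ n) a = b) {m : ℕ} (hm : Nat.card α = m) :
    ∃ g : α → ZMod m, Function.Injective g ∧ g a = 0 ∧ ∀ b, g (σ b) = g b + 1 := by
  have htop : ∀ b, b ∈ MulAction.orbit (Subgroup.zpowers σ) a := by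
    intro b
    obtain ⟨n, hn⟩ := h b
    exact ⟨⟨σ ^ n, n, rfl⟩, hn⟩
  let E := MulAction.orbitZPowersEquiv σ a
  have hE : ∀ k : ℤ, ∀ hk, E ⟨(σ ^ k) a, hk⟩ = k := by
    intro k hk
    rw [← Equiv.eq_symm_apply, MulAction.orbitZPowersEquiv_symm_apply']
    rfl
  obtain rfl : Function.minimalPeriod (σ • ·) a = m := by
    rw [← hm, ← Nat.card_zmod (Function.minimalPeriod (σ • ·) a), ← Nat.card_congr E]
    exact Nat.card_congr (Equiv.subtypeUnivEquiv htop)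
  refine ⟨fun b => E ⟨b, htop b⟩, fun b c hbc => ?_, ?_, fun b => ?_⟩
  · simpa using hbc
  · simpa using hE 0 (htop _)
  · obtain ⟨n, rfl⟩ := h b
    have e : σ ((σ ^ n) a) = (σ ^ (n + 1)) a := by
      rw [add_comm, zpow_add, zpow_one, Equiv.Perm.mul_apply]
    simp only [e, hE]
    push_cast
    rfl

theorem map_zpow_apply_of_map_apply {X G : Type*} [AddGroupWithOne G] (T : Equiv.Perm X)
    {f : X → G} (hf : ∀ x, f (T x) = f x + 1) (n : ℤ) (x : X) : f ((T ^ n) x) = f x + n := by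
  induction n with
  | zero => simp
  | succ n ih =>
    rw [add_comm, zpow_add, zpow_one, Equiv.Perm.mul_apply, hf, ih, add_comm (1 : ℤ)]
    push_cast
    rw [add_assoc]
  | pred n ih =>
    have h := hf ((T ^ (-(n : ℤ) - 1)) x)
    rw [← Equiv.Perm.mul_apply, ← zpow_one_add, add_sub_cancel, ih] at h
    rw [← add_left_inj (1 : G), ← h, add_assoc]
    push_cast
    simp

/-- Two systems embedding equivariantly into the same group rotation, with dense orbits of points
sent to `0`, are conjugate. -/
theorem exists_conjugacy_of_embeddings {X G : Type*} [TopologicalSpace X] [CompactSpace X]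
    [TopologicalSpace G] [T2Space G] [AddGroupWithOne G] (S T : Equiv.Perm X)
    (F H : X → G) (hF : Continuous F) (hH : Continuous H) (hFi : Function.Injective F)
    (hHi : Function.Injective H) (hFT : ∀ x, F (T x) = F x + 1) (hHS : ∀ x, H (S x) = H x + 1)
    (x₀ : X) (hF0 : F x₀ = 0) (hH0 : H x₀ = 0)
    (hT : Dense (Set.range fun n : ℤ => (T ^ n) x₀))
    (hS : Dense (Set.range fun n : ℤ => (S ^ n) x₀)) :
    ∃ φ : X ≃ₜ X, ∀ x, φ (S x) = T (φ x) := by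
  have key : ∀ (R : Equiv.Perm X) (f : X → G), Continuous f → (∀ x, f (R x) = f x + 1) →
      f x₀ = 0 → Dense (Set.range fun n : ℤ => (R ^ n) x₀) →
      Set.range f = closure (Set.range fun n : ℤ => (n : G)) := by
    intro R f hf hfR h0 hd
    have e : (Set.range fun n : ℤ => (n : G)) = f '' Set.range fun n : ℤ => (R ^ n) x₀ := by
      rw [← Set.range_comp]
      congr 1
      ext n
      simp [map_zpow_apply_of_map_apply R hfR, h0]
    rw [e, hf.isClosedMap.closure_image_eq_of_continuous hf, hd.closure_eq, Set.image_univ]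
  have hFe := hF.isClosedEmbedding hFi
  have hHe := hH.isClosedEmbedding hHi
  have hr : Set.range H = Set.range F := (key S H hH hHS hH0 hS).trans (key T F hF hFT hF0 hT).symm
  let φ : X ≃ₜ X := hHe.isEmbedding.toHomeomorph.trans
    ((Homeomorph.setCongr hr).trans hFe.isEmbedding.toHomeomorph.symm)
  have hφ : ∀ x, F (φ x) = H x := fun x =>
    congrArg Subtype.val (hFe.isEmbedding.toHomeomorph.apply_symm_apply
      (Homeomorph.setCongr hr (hHe.isEmbedding.toHomeomorph x)))
  exact ⟨φ, fun x => hFi (by rw [hφ, hHS, hFT, hφ])⟩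

/-- A locally constant function on a compact space factors through all late enough terms of a
separating sequence of finer and finer continuous discrete-valued maps. -/
theorem exists_forall_factors_of_separating {X β : Type*} [TopologicalSpace X] [CompactSpace X]
    {α : ℕ → Type*} [∀ k, TopologicalSpace (α k)] [∀ k, DiscreteTopology (α k)]
    [TopologicalSpace β] [DiscreteTopology β] (f : ∀ k, X → α k) (hf : ∀ k, Continuous (f k))
    (hnest : ∀ k x y, f (k + 1) x = f (k + 1) y → f k x = f k y)
    (hsep : ∀ x y, (∀ k, f k x = f k y) → x = y) (p : X → β) (hp : Continuous p) :
    ∃ k, ∀ x y, f k x = f k y → p x = p y := by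
  by_contra! hcon
  let C : ℕ → Set (X × X) := fun k => {z | f k z.1 = f k z.2} ∩ {z | p z.1 = p z.2}ᶜ
  have hC : ∀ k, IsClosed (C k) := fun k =>
    (isClosed_eq ((hf k).comp continuous_fst) ((hf k).comp continuous_snd)).inter
      ((isOpen_discrete {z : β × β | z.1 = z.2}).preimage
        ((hp.comp continuous_fst).prodMk (hp.comp continuous_snd))).isClosed_compl
  obtain ⟨z, hz⟩ := IsCompact.nonempty_iInter_of_sequence_nonempty_isCompact_isClosed C
    (fun k z hz => ⟨hnest k _ _ hz.1, hz.2⟩)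
    (fun k => (hcon k).elim fun x ⟨y, h, h'⟩ => ⟨(x, y), h, h'⟩) (hC 0).isCompact hC
  rw [Set.mem_iInter] at hz
  exact (hz 0).2 (congrArg p (hsep _ _ fun k => (hz k).1))

/-- If a permutation `S` with a dense orbit maps fibres of a continuous surjection `f` onto `ZMod m`
into fibres, then it permutes these fibres cyclically. -/
theorem exists_cyclic_factor {X : Type*} [TopologicalSpace X] (S : Equiv.Perm X) {m : ℕ}
    [NeZero m] (f : X → ZMod m) (hf : Continuous f) (hsurj : Function.Surjective f)
    (hfS : ∀ x y, f x = f y → f (S x) = f (S y)) (x₀ : X)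
    (hd : Dense (Set.range fun n : ℤ => (S ^ n) x₀)) :
    ∃ g : X → ZMod m, Continuous g ∧ g x₀ = 0 ∧ (∀ x, g (S x) = g x + 1) ∧
      ∀ x y, g x = g y → f x = f y := by
  let s : ZMod m → ZMod m := fun a => f (S (Function.surjInv hsurj a))
  have hs : ∀ x, s (f x) = f (S x) := fun x => hfS _ _ (Function.surjInv_eq hsurj _)
  have hs_surj : Function.Surjective s := by
    intro a
    obtain ⟨y, rfl⟩ := hsurj a
    exact ⟨f (S.symm y), by rw [hs, Equiv.apply_symm_apply]⟩
  let σ : Equiv.Perm (ZMod m) := Equiv.ofBijective s (Finite.surjective_iff_bijective.1 hs_surj)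
  have hσ : ∀ x, σ (f x) = f (S x) := hs
  have hpow : ∀ (n : ℤ) x, (σ ^ n) (f x) = f ((S ^ n) x) := by
    intro n
    induction n with
    | zero => simp
    | succ n ih =>
      intro x
      rw [add_comm, zpow_add, zpow_add, zpow_one, zpow_one, Equiv.Perm.mul_apply, ih, hσ,
        Equiv.Perm.mul_apply]
    | pred n ih =>
      intro x
      apply σ.injective
      rw [hσ, ← Equiv.Perm.mul_apply, ← Equiv.Perm.mul_apply, ← zpow_one_add, ← zpow_one_add,
        add_sub_cancel, ih]
  obtain ⟨g, hgi, hg0, hg⟩ := exists_equiv_zmod_of_transitive σ (f x₀) (m := m) (fun b => by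
    obtain ⟨_, hx, n, rfl⟩ := hd.inter_open_nonempty _ ((isOpen_discrete {b}).preimage hf)
      (hsurj b)
    exact ⟨n, (hpow n x₀).trans hx⟩) (Nat.card_zmod m)
  exact ⟨g ∘ f, continuous_of_discreteTopology.comp hf, hg0,
    fun x => by simp only [Function.comp_apply, ← hσ, hg], fun x y h => hgi h⟩

/-- A minimal bounded speedup of an odometer is topologically conjugate to
the odometer itself. -/
theorem boundedSpeedup_of_odometer_conjugate
    {X : Type*} [TopologicalSpace X] [CompactSpace X]
    [TopologicalSpace.MetrizableSpace X] [TotallyDisconnectedSpace X] [PerfectSpace X]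
    [Nonempty X]
    (T : Equiv.Perm X) (hTc : Continuous T) (hTc' : Continuous T.symm)
    (hTmin : IsMinimalHomeo T)
    (hodo : ∃ (m : ℕ → ℕ) (A : ℕ → Set X), IsOdometerData T m A)
    (p : X → ℕ) (hp1 : ∀ x, 1 ≤ p x) (hpbdd : ∃ M : ℕ, ∀ x, p x ≤ M)
    (S : Equiv.Perm X) (hSc : Continuous S) (hSc' : Continuous S.symm)
    (hSp : ∀ x, S x = (T ^ p x) x) (hSmin : IsMinimalHomeo S) :
    ∃ φ : X ≃ₜ X, ∀ x, φ (S x) = T (φ x) := by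
  obtain ⟨m, A, hm0, -, hgrow, hA, hdisj, hcov, hper, href, hsepA⟩ := hodo
  obtain ⟨M, hM⟩ := hpbdd
  have hmk : ∀ k, k < m k := by
    intro k
    induction k with
    | zero => omega
    | succ k ih => have := hgrow k; omega
  have hne : ∀ k, NeZero (m k) := fun k => ⟨(Nat.zero_le k |>.trans_lt (hmk k)).ne'⟩
  choose f hfc hfT hfA using fun k => exists_zmod_factor T hTc' (m k)
    (Nat.zero_le k |>.trans_lt (hmk k)) (A k) (hA k).2.isOpen (hdisj k) (hcov k) (hper k)
  have hnest : ∀ k x y, f (k + 1) x = f (k + 1) y → f k x = f k y := by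
    intro k x y h
    have hlt := ZMod.val_lt (f (k + 1) x)
    obtain ⟨j, hj, hsub⟩ := href k _ hlt
    have hx := hsub ((hfA _ x _ hlt).2 (ZMod.natCast_zmod_val _).symm)
    have hy := hsub ((hfA _ y _ hlt).2 (h.symm.trans (ZMod.natCast_zmod_val _).symm))
    rw [(hfA k x j hj).1 hx, (hfA k y j hj).1 hy]
  have hnest' : ∀ K k x y, f (k + K) x = f (k + K) y → f k x = f k y := by
    intro K k x y h
    induction K with
    | zero => exact h
    | succ K ih => exact ih (hnest _ _ _ h)
  have hsep : ∀ x y, (∀ k, f k x = f k y) → x = y := by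
    intro x y h
    by_contra hxy
    obtain ⟨k, hk⟩ := hsepA x y hxy
    have hlt := ZMod.val_lt (f k x)
    exact hk _ hlt ⟨(hfA _ x _ hlt).2 (ZMod.natCast_zmod_val _).symm,
      (hfA _ y _ hlt).2 ((h k).symm.trans (ZMod.natCast_zmod_val _).symm)⟩
  have hfS : ∀ k x, f k (S x) = f k x + p x := by
    intro k x
    simpa [hSp] using map_zpow_apply_of_map_apply T (hfT k) (p x) x
  have hpval : p = fun x => (f M (S x) - f M x).val := by
    ext x
    rw [hfS, add_sub_cancel_left, ZMod.val_natCast_of_lt ((hM x).trans_lt (hmk M))]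
  have hpc : Continuous p := by
    rw [hpval]
    exact (continuous_of_discreteTopology (f := ZMod.val)).comp
      (((hfc M).comp hSc).sub (hfc M))
  obtain ⟨K, hK⟩ := exists_forall_factors_of_separating f hfc hnest hsep p hpc
  obtain ⟨x₀⟩ := ‹Nonempty X›
  have hsurj : ∀ k, Function.Surjective (f k) := by
    intro k b
    refine ⟨(T ^ (((b - f k x₀).val : ℕ) : ℤ)) x₀, ?_⟩
    rw [map_zpow_apply_of_map_apply T (hfT k)]
    simp
  have hfS' : ∀ k x y, f (K + k) x = f (K + k) y → f (K + k) (S x) = f (K + k) (S y) := by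
    intro k x y h
    rw [hfS, hfS, h, hK x y (hnest' k K x y h)]
  choose g hgc hg0 hgS hgf using fun k =>
    exists_cyclic_factor S (f (K + k)) (hfc _) (hsurj _) (hfS' k) x₀ (hSmin x₀)
  have hsepK : ∀ x y, (∀ k, f (K + k) x = f (K + k) y) → x = y := fun x y h =>
    hsep x y fun k => hnest' K k x y (by rw [add_comm k]; exact h k)
  refine exists_conjugacy_of_embeddings (G := ∀ k, ZMod (m (K + k))) S T
    (fun x k => f (K + k) x - f (K + k) x₀) (fun x k => g k x)
    (continuous_pi fun k => (hfc _).sub continuous_const) (continuous_pi hgc)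
    (fun x y h => hsepK x y fun k => sub_left_injective (congrFun h k))
    (fun x y h => hsepK x y fun k => hgf k x y (congrFun h k))
    (fun x => ?_) (fun x => funext fun k => hgS k x) x₀ (funext fun k => sub_self _)
    (funext hg0) (hTmin x₀) (hSmin x₀)
  funext k
  simp only [hfT, Pi.add_apply, Pi.one_apply]
  ring
end

section
/- Let (X,T) be an odometer system with partition data of sizes m_k, and write α_k = m_k/m_{k−1} (with m_0 = 1). Let c ≥ 1 be an integer such that for some N ∈ ℤ⁺, gcd(c, α_i) = 1 for all i ≥ N. Then (X,T) has a minimal bounded speedup with orbit number c: there exists a continuous bounded function p : X → ℤ⁺ such that S(x) = T^{p(x)}(x) defines a minimal homeomorphism S : X → X, and every T-orbit is the union of exactly c distinct S-orbits. -/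
/-- A cyclic clopen tower, described through return times: if `T ^ M` preserves `A` and the
translates `T ^ i A`, `i < M`, partition `X`, then the set of times at which a given point visits
`A` is a residue class modulo `M`. -/
theorem exists_visit_times_eq_residue_class {X : Type*} (T : Equiv.Perm X) (A : Set X) (M : ℕ)
    (hdisj : ∀ i < M, ∀ j < M, i ≠ j → Disjoint ((⇑(T ^ i)) '' A) ((⇑(T ^ j)) '' A))
    (hcover : (⋃ i < M, (⇑(T ^ i)) '' A) = Set.univ)
    (hinv : (⇑(T ^ M)) '' A = A) (x : X) :
    ∃ r : ℤ, ∀ n : ℤ, (T ^ n) x ∈ A ↔ (M : ℤ) ∣ n - r := by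
  have hstep : ∀ y, (T ^ (M : ℤ)) y ∈ A ↔ y ∈ A := by
    intro y
    rw [zpow_natCast]
    constructor
    · intro hy
      rw [← hinv] at hy
      obtain ⟨z, hz, hzy⟩ := hy
      rwa [← (T ^ M).injective hzy]
    · intro hy
      rw [← hinv]
      exact ⟨y, hy, rfl⟩
  have hmul : ∀ (q : ℤ) (y : X), (T ^ ((M : ℤ) * q)) y ∈ A ↔ y ∈ A := by
    intro q
    induction q using Int.induction_on with
    | zero => simp
    | succ q ih =>
      intro y
      rw [mul_add, mul_one, add_comm, zpow_add, Equiv.Perm.mul_apply, hstep, ih]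
    | pred q ih =>
      intro y
      rw [← hstep, ← Equiv.Perm.mul_apply, ← zpow_add, ← ih y]
      ring_nf
  have hx : x ∈ ⋃ i < M, (⇑(T ^ i)) '' A := hcover ▸ Set.mem_univ x
  simp only [Set.mem_iUnion] at hx
  obtain ⟨i, hi, a, ha, rfl⟩ := hx
  have hM : (0 : ℤ) < M := by omega
  refine ⟨-i, fun n => ?_⟩
  rw [← zpow_natCast, ← Equiv.Perm.mul_apply, ← zpow_add, sub_neg_eq_add]
  set s := n + (i : ℤ)
  have hs : s = M * (s / M) + s % M := (Int.mul_ediv_add_emod s M).symm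
  have hlt := Int.emod_lt_of_pos s hM
  have hnn := Int.emod_nonneg s hM.ne'
  obtain ⟨j, hj⟩ := Int.eq_ofNat_of_zero_le hnn
  rw [hj] at hlt hs
  rw [Int.dvd_iff_emod_eq_zero, hj, hs, zpow_add, Equiv.Perm.mul_apply, hmul, zpow_natCast]
  constructor
  · intro hmem
    by_contra hne
    refine Set.disjoint_left.1 (hdisj j (by omega) 0 (by omega) (by omega))
      ⟨a, ha, rfl⟩ ?_
    simpa using hmem
  · intro h0
    have : j = 0 := by omega
    simpa [this] using ha

open scoped Classical in
theorem IsClopen.continuous_ite_mem {X Y : Type*} [TopologicalSpace X] [TopologicalSpace Y]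
    {B : Set X} {f g : X → Y} (hB : IsClopen B) (hf : Continuous f) (hg : Continuous g) :
    Continuous fun x => if x ∈ B then f x else g x := by
  refine Continuous.if (fun a ha => ?_) hf hg
  rw [Set.ofPred_mem_eq, hB.frontier_eq] at ha
  exact ha.elim

/-- The map which is `T` except that a point arriving in `A` is further moved by `T ^ e`. -/
theorem exists_speedup_of_clopen {X : Type*} [TopologicalSpace X] (T : Equiv.Perm X)
    (hTc : Continuous T) (hTc' : Continuous T.symm) (A : Set X) (hA : IsClopen A) (e : ℕ)
    (hinv : ∀ x, (T ^ e) x ∈ A ↔ x ∈ A) :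
    ∃ p : X → ℕ, Continuous p ∧ (∀ x, T x ∈ A → p x = e + 1) ∧ (∀ x, T x ∉ A → p x = 1) ∧
      ∃ S : Equiv.Perm X, Continuous S ∧ Continuous S.symm ∧ ∀ x, S x = (T ^ p x) x := by
  classical
  have hpow : ∀ n : ℕ, Continuous ⇑(T ^ n) := fun n => by
    rw [Equiv.Perm.coe_pow]; exact hTc.iterate n
  have hpow' : Continuous ⇑(T ^ e).symm := by
    have : (T ^ e).symm = T.symm ^ e := (inv_pow T e).symm
    rw [this, Equiv.Perm.coe_pow]; exact hTc'.iterate e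
  have hinv' : ∀ x, (T ^ e).symm x ∈ A ↔ x ∈ A := fun x => by
    rw [← hinv, Equiv.apply_symm_apply]
  let U : Equiv.Perm X :=
    { toFun := fun x => if x ∈ A then (T ^ e) x else x
      invFun := fun x => if x ∈ A then (T ^ e).symm x else x
      left_inv := fun x => by
        by_cases hx : x ∈ A <;> simp [hx, hinv]
      right_inv := fun x => by
        by_cases hx : x ∈ A
        · simp only [hx, if_true, hinv', Equiv.apply_symm_apply]
        · simp [hx] }
  refine ⟨fun x => if x ∈ T ⁻¹' A then e + 1 else 1, ?_, fun x hx => if_pos hx,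
    fun x hx => if_neg hx, U * T, ?_, ?_, fun x => ?_⟩
  · exact (hA.preimage hTc).continuous_ite_mem continuous_const continuous_const
  · exact (hA.continuous_ite_mem (hpow e) continuous_id).comp hTc
  · exact hTc'.comp (hA.continuous_ite_mem hpow' continuous_id)
  · by_cases hx : T x ∈ A
    · simp [U, hx, pow_succ]
    · simp [U, hx]

section Tower

variable {X : Type*} {T S : Equiv.Perm X} {A : Set X} {M c : ℕ} {p : X → ℕ}

theorem zpow_apply_mem_iff_dvd
    (hA : ∀ x, ∃ r : ℤ, ∀ n : ℤ, (T ^ n) x ∈ A ↔ (M : ℤ) ∣ n - r) {a : X} (ha : a ∈ A) (n : ℤ) :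
    (T ^ n) a ∈ A ↔ (M : ℤ) ∣ n := by
  obtain ⟨r, hr⟩ := hA a
  have h0 : (M : ℤ) ∣ r := by simpa using (hr 0).1 (by simpa using ha)
  rw [hr n, dvd_sub_left h0]

theorem self_mem_zOrbit (S : Equiv.Perm X) (x : X) : x ∈ zOrbit S x := ⟨0, by simp⟩

theorem zOrbit_eq_of_mem {x y : X} (h : y ∈ zOrbit S x) : zOrbit S y = zOrbit S x := by
  obtain ⟨k, rfl⟩ := h
  ext z
  constructor
  · rintro ⟨n, rfl⟩
    exact ⟨n + k, by simp [zpow_add]⟩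
  · rintro ⟨n, rfl⟩
    exact ⟨n - k, by simp [zpow_sub]⟩

/-- The `S`-orbit of a base point of a cyclic tower, when `S` agrees with `T` except that it
winds `c` times around the tower on each passage through the top. -/
theorem mem_zOrbit_speedup_iff (hM : 0 < M) (hc : 1 ≤ c)
    (hA : ∀ x, ∃ r : ℤ, ∀ n : ℤ, (T ^ n) x ∈ A ↔ (M : ℤ) ∣ n - r)
    (hp : ∀ x, T x ∈ A → p x = (c - 1) * M + 1) (hp' : ∀ x, T x ∉ A → p x = 1)
    (hS : ∀ x, S x = (T ^ p x) x) {a : X} (ha : a ∈ A) (z : X) :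
    z ∈ zOrbit S a ↔
      ∃ n i : ℤ, 0 ≤ i ∧ i < M ∧ z = (T ^ ((c : ℤ) * M * n + i)) a := by
  have hret : ∀ b ∈ A, ∀ n : ℤ, (T ^ n) b ∈ A ↔ (M : ℤ) ∣ n := fun b hb n =>
    zpow_apply_mem_iff_dvd hA hb n
  have hlow : ∀ b ∈ A, ∀ i : ℕ, i < M → (S ^ i) b = (T ^ i) b := by
    intro b hb i
    induction i with
    | zero => simp
    | succ i ih =>
      intro hi
      have hnot : T ((T ^ i) b) ∉ A := by
        rw [← Equiv.Perm.mul_apply, ← pow_succ', ← zpow_natCast, hret b hb]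
        intro hd
        have := Int.le_of_dvd (by positivity) hd
        omega
      rw [pow_succ', Equiv.Perm.mul_apply, ih (by omega), hS, hp' _ hnot, pow_one,
        pow_succ' T, Equiv.Perm.mul_apply]
  have htop : ∀ b ∈ A, (S ^ (M : ℤ)) b = (T ^ ((c : ℤ) * M)) b := by
    intro b hb
    obtain ⟨k, rfl⟩ : ∃ k, M = k + 1 := ⟨M - 1, by omega⟩
    have hin : T ((T ^ k) b) ∈ A := by
      rw [← Equiv.Perm.mul_apply, ← pow_succ', ← zpow_natCast, hret b hb]
    obtain ⟨d, rfl⟩ : ∃ d, c = d + 1 := ⟨c - 1, by omega⟩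
    rw [zpow_natCast, pow_succ', Equiv.Perm.mul_apply, hlow b hb k (by omega), hS, hp _ hin,
      ← Equiv.Perm.mul_apply, ← pow_add, ← zpow_natCast]
    congr 2
    push_cast [Nat.add_sub_cancel]
    ring
  have hwind : ∀ n : ℤ, (S ^ ((M : ℤ) * n)) a = (T ^ ((c : ℤ) * M * n)) a := by
    have hmem : ∀ n : ℤ, (T ^ ((c : ℤ) * M * n)) a ∈ A := fun n =>
      (hret a ha _).2 ⟨c * n, by ring⟩
    intro n
    induction n using Int.induction_on with
    | zero => simp
    | succ n ih =>
      rw [mul_add, mul_one, add_comm, zpow_add, Equiv.Perm.mul_apply, ih, htop _ (hmem _),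
        ← Equiv.Perm.mul_apply, ← zpow_add]
      ring_nf
    | pred n ih =>
      apply (S ^ (M : ℤ)).injective
      rw [htop _ (hmem _), ← Equiv.Perm.mul_apply, ← Equiv.Perm.mul_apply, ← zpow_add,
        ← zpow_add]
      convert ih using 3 <;> ring
  have hall : ∀ n i : ℤ, 0 ≤ i → i < M →
      (S ^ ((M : ℤ) * n + i)) a = (T ^ ((c : ℤ) * M * n + i)) a := by
    intro n i hi hiM
    lift i to ℕ using hi
    have hmem : (T ^ ((c : ℤ) * M * n)) a ∈ A := (hret a ha _).2 ⟨c * n, by ring⟩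
    rw [add_comm, zpow_add, Equiv.Perm.mul_apply, hwind, zpow_natCast,
      hlow _ hmem i (by omega), ← zpow_natCast, ← Equiv.Perm.mul_apply, ← zpow_add, add_comm]
  have hM' : (0 : ℤ) < M := by omega
  constructor
  · rintro ⟨s, rfl⟩
    refine ⟨s / M, s % M, Int.emod_nonneg _ hM'.ne', Int.emod_lt_of_pos _ hM', ?_⟩
    rw [← hall _ _ (Int.emod_nonneg _ hM'.ne') (Int.emod_lt_of_pos _ hM'),
      Int.mul_ediv_add_emod]
  · rintro ⟨n, i, hi, hiM, rfl⟩
    exact ⟨M * n + i, hall n i hi hiM⟩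

/-- Every `S`-orbit meets the base of the tower. -/
theorem exists_base_zOrbit_speedup_eq (hM : 0 < M) (hc : 1 ≤ c)
    (hA : ∀ x, ∃ r : ℤ, ∀ n : ℤ, (T ^ n) x ∈ A ↔ (M : ℤ) ∣ n - r)
    (hp : ∀ x, T x ∈ A → p x = (c - 1) * M + 1) (hp' : ∀ x, T x ∉ A → p x = 1)
    (hS : ∀ x, S x = (T ^ p x) x) (y : X) :
    ∃ b ∈ A, zOrbit S y = zOrbit S b := by
  obtain ⟨r, hr⟩ := hA y
  have hM' : (0 : ℤ) < M := by omega
  have hb : (T ^ (-((-r) % M))) y ∈ A := by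
    rw [hr]
    refine ⟨(-r) / M, ?_⟩
    have := Int.mul_ediv_add_emod (-r) M
    linarith
  refine ⟨_, hb, zOrbit_eq_of_mem ?_⟩
  rw [mem_zOrbit_speedup_iff hM hc hA hp hp' hS hb]
  refine ⟨0, (-r) % M, Int.emod_nonneg _ hM'.ne', Int.emod_lt_of_pos _ hM', ?_⟩
  rw [← Equiv.Perm.mul_apply, ← zpow_add]
  simp

theorem isOrbitNumber_speedup (hM : 0 < M) (hc : 1 ≤ c)
    (hA : ∀ x, ∃ r : ℤ, ∀ n : ℤ, (T ^ n) x ∈ A ↔ (M : ℤ) ∣ n - r)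
    (hfree : ∀ (x : X) (n : ℤ), (T ^ n) x = x → n = 0)
    (hp : ∀ x, T x ∈ A → p x = (c - 1) * M + 1) (hp' : ∀ x, T x ∉ A → p x = 1)
    (hS : ∀ x, S x = (T ^ p x) x) : IsOrbitNumber T S c := by
  refine ⟨hc, fun x => ?_⟩
  have hM' : (0 : ℤ) < M := by omega
  have hc' : (0 : ℤ) < c := by omega
  obtain ⟨a, ha, hxa⟩ : ∃ a ∈ A, zOrbit T x = zOrbit T a := by
    obtain ⟨r, hr⟩ := hA x
    exact ⟨(T ^ r) x, (hr r).2 (by simp), (zOrbit_eq_of_mem ⟨r, rfl⟩).symm⟩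
  have hmem : ∀ r : ℤ, (T ^ ((M : ℤ) * r)) a ∈ A := fun r =>
    (zpow_apply_mem_iff_dvd hA ha _).2 ⟨r, rfl⟩
  have horb := fun {b : X} (hb : b ∈ A) => mem_zOrbit_speedup_iff hM hc hA hp hp' hS hb
  have himage : {O : Set X | (∃ y : X, O = zOrbit S y) ∧ O ⊆ zOrbit T x} =
      (fun r : ℕ => zOrbit S ((T ^ ((M : ℤ) * r)) a)) '' Set.Iio c := by
    ext O
    constructor
    · rintro ⟨⟨y, rfl⟩, hsub⟩
      obtain ⟨b, hb, hyb⟩ := exists_base_zOrbit_speedup_eq hM hc hA hp hp' hS y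
      rw [hyb, hxa] at hsub
      obtain ⟨n, rfl⟩ := hsub (self_mem_zOrbit S b)
      obtain ⟨q, rfl⟩ := (zpow_apply_mem_iff_dvd hA ha n).1 hb
      obtain ⟨r, hr⟩ := Int.eq_ofNat_of_zero_le (Int.emod_nonneg q hc'.ne')
      have hlt := Int.emod_lt_of_pos q hc'
      have hq := Int.mul_ediv_add_emod q c
      refine ⟨r, by simp only [Set.mem_Iio]; omega, ?_⟩
      rw [hyb]
      refine (zOrbit_eq_of_mem ((horb (hmem r) _).2 ⟨q / c, 0, le_rfl, hM', ?_⟩)).symm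
      rw [← Equiv.Perm.mul_apply, ← zpow_add]
      change (T ^ ((M : ℤ) * q)) a = _
      congr 2
      rw [hr] at hq
      linear_combination -(M : ℤ) * hq
    · rintro ⟨r, -, rfl⟩
      refine ⟨⟨_, rfl⟩, fun z hz => ?_⟩
      obtain ⟨n, i, -, -, rfl⟩ := (horb (hmem r) z).1 hz
      rw [hxa, ← Equiv.Perm.mul_apply, ← zpow_add]
      exact ⟨_, rfl⟩
  rw [himage, Set.InjOn.ncard_image]
  · simp
  · intro r hr r' hr' heq
    simp only [Set.mem_Iio] at hr hr'
    have h : (T ^ ((M : ℤ) * r)) a ∈ zOrbit S ((T ^ ((M : ℤ) * r')) a) := by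
      rw [← show zOrbit S ((T ^ ((M : ℤ) * r)) a) = zOrbit S ((T ^ ((M : ℤ) * r')) a) from heq]
      exact self_mem_zOrbit S _
    obtain ⟨n, i, hi, hiM, h⟩ := (horb (hmem r') _).1 h
    rw [← Equiv.Perm.mul_apply, ← zpow_add] at h
    have h0 : (M : ℤ) * r - (c * M * n + i + M * r') = 0 := by
      apply hfree ((T ^ ((c : ℤ) * M * n + i + M * r')) a)
      rw [← Equiv.Perm.mul_apply, ← zpow_add, sub_add_cancel, h]
    have hi0 : i = 0 := by
      refine Int.eq_zero_of_dvd_of_nonneg_of_lt hi hiM ⟨r - c * n - r', ?_⟩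
      linear_combination -h0
    have h1 : (r : ℤ) - r' = c * n := by
      apply mul_left_cancel₀ hM'.ne'
      linear_combination h0 + hi0
    have h2 : (r : ℤ) - r' = 0 := by
      apply Int.eq_zero_of_abs_lt_dvd ⟨n, h1⟩
      rw [abs_lt]
      omega
    omega

end Tower

/-- The cells of the partitions of an odometer form a neighbourhood basis. -/
theorem exists_cell_subset {X : Type*} [TopologicalSpace X] [CompactSpace X]
    {T : Equiv.Perm X} (hTc : Continuous T) (hTc' : Continuous T.symm) {A : ℕ → Set X} {m : ℕ → ℕ}
    (hclosed : ∀ k, IsClosed (A k))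
    (hrefine : ∀ k, ∃ j : ℤ, ∀ z ∈ A (k + 1), (T ^ j) z ∈ A k)
    (hA : ∀ k x, ∃ r : ℤ, ∀ n : ℤ, (T ^ n) x ∈ A k ↔ (m k : ℤ) ∣ n - r)
    (hsep : ∀ x y, (∀ k, ∃ n : ℤ, (T ^ n) x ∈ A k ∧ (T ^ n) y ∈ A k) → x = y)
    (y : X) {U : Set X} (hU : U ∈ nhds y) (K : ℕ) :
    ∃ k, K ≤ k ∧ ∃ n : ℤ, (T ^ n) y ∈ A k ∧ ∀ z, (T ^ n) z ∈ A k → z ∈ U := by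
  choose j hj using hrefine
  have hpow : ∀ n : ℤ, Continuous ⇑(T ^ n) := by
    intro n
    cases n with
    | ofNat n =>
      rw [Int.ofNat_eq_natCast, zpow_natCast, Equiv.Perm.coe_pow]
      exact hTc.iterate n
    | negSucc n =>
      rw [zpow_negSucc, ← inv_pow, Equiv.Perm.coe_pow]
      exact hTc'.iterate _
  choose r hr using hA
  have hself : ∀ k, (T ^ r k y) y ∈ A k := fun k => (hr k y _).2 (by simp)
  let V : ℕ → Set X := fun k => {z | (T ^ r k y) z ∈ A k}
  have hanti : Antitone V := by
    refine antitone_nat_of_succ_le fun k z hz => ?_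
    have hy := hj k _ (hself (k + 1))
    have hz := hj k _ hz
    rw [← Equiv.Perm.mul_apply, ← zpow_add, hr] at hy hz
    change (T ^ r k y) z ∈ A k
    rw [hr]
    rw [show r k y - r k z = (j k + r (k + 1) y - r k z) - (j k + r (k + 1) y - r k y) by ring]
    exact dvd_sub hz hy
  obtain ⟨k, hk⟩ : ∃ k, V k ⊆ U := by
    refine exists_subset_nhds_of_compactSpace hanti.directed_ge
      (fun k => (hclosed k).preimage (hpow _)) fun z hz => ?_
    have : y = z := hsep y z fun k => ⟨r k y, hself k, Set.mem_iInter.1 hz k⟩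
    exact this ▸ hU
  exact ⟨max k K, le_max_right _ _, r _ y, hself _, fun z hz => hk (hanti (le_max_left k K) hz)⟩

/-- If `(X,T)` is an odometer with partition sizes `m k` and `c ≥ 1` is
eventually coprime to the ratios `α_i = m (i+1) / m i`, then `(X,T)` admits a minimal
bounded speedup with orbit number `c`. -/
theorem odometer_exists_minimal_boundedSpeedup
    {X : Type*} [TopologicalSpace X] [CompactSpace X]
    [TopologicalSpace.MetrizableSpace X] [TotallyDisconnectedSpace X] [PerfectSpace X]
    [Nonempty X]
    (T : Equiv.Perm X) (hTc : Continuous T) (hTc' : Continuous T.symm)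
    (hTmin : IsMinimalHomeo T)
    (m : ℕ → ℕ) (A : ℕ → Set X) (hodo : IsOdometerData T m A)
    (c : ℕ) (hc : 1 ≤ c)
    (hgcd : ∃ N : ℕ, ∀ i, N ≤ i → Nat.gcd c (m (i + 1) / m i) = 1) :
    ∃ p : X → ℕ, Continuous p ∧ (∀ x, 1 ≤ p x) ∧ (∃ M : ℕ, ∀ x, p x ≤ M) ∧
      ∃ S : Equiv.Perm X, Continuous S ∧ Continuous S.symm ∧
        (∀ x, S x = (T ^ p x) x) ∧ IsMinimalHomeo S ∧ IsOrbitNumber T S c := by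
  obtain ⟨hm0, hdvd, hgrow, hclopen, hdisj, hcover, hinv, hrefine, hsep⟩ := hodo
  obtain ⟨N, hN⟩ := hgcd
  have hA : ∀ k x, ∃ r : ℤ, ∀ n : ℤ, (T ^ n) x ∈ A k ↔ (m k : ℤ) ∣ n - r := fun k =>
    exists_visit_times_eq_residue_class T (A k) (m k) (hdisj k) (hcover k) (hinv k)
  have hlt : ∀ k, k < m k := by
    intro k
    induction k with
    | zero => omega
    | succ k ih => have := hgrow k; omega
  have hpos : ∀ k, 0 < m k := fun k => (Nat.zero_le k).trans_lt (hlt k)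
  have hfree : ∀ (x : X) (n : ℤ), (T ^ n) x = x → n = 0 := by
    intro x n hn
    obtain ⟨r, hr⟩ := hA n.natAbs x
    have h : (T ^ (r + n)) x ∈ A n.natAbs := by
      rw [zpow_add, Equiv.Perm.mul_apply, hn, hr, sub_self]
      exact dvd_zero _
    rw [hr, add_sub_cancel_left] at h
    apply Int.eq_zero_of_abs_lt_dvd h
    rw [Int.abs_eq_natAbs]
    exact_mod_cast hlt n.natAbs
  have hcop : ∀ k, N ≤ k → ∃ L : ℕ, m k = m N * L ∧ Nat.Coprime c L := by
    intro k hk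
    induction k, hk using Nat.le_induction with
    | base => exact ⟨1, by simp, by simp⟩
    | succ k hk ih =>
      obtain ⟨L, hL, hcL⟩ := ih
      refine ⟨L * (m (k + 1) / m k), ?_, hcL.mul_right (hN k hk)⟩
      rw [← mul_assoc, ← hL, Nat.mul_div_cancel' (hdvd k)]
  have hsep' : ∀ x y, (∀ k, ∃ n : ℤ, (T ^ n) x ∈ A k ∧ (T ^ n) y ∈ A k) → x = y := by
    intro x y hxy
    by_contra hne
    obtain ⟨k, hk⟩ := hsep x y hne
    obtain ⟨n, hx, hy⟩ := hxy k
    have hmk : (0 : ℤ) < m k := by exact_mod_cast hpos k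
    obtain ⟨i, hi⟩ := Int.eq_ofNat_of_zero_le (Int.emod_nonneg (-n) hmk.ne')
    have hilt := Int.emod_lt_of_pos (-n) hmk
    have hdiv := Int.mul_ediv_add_emod (-n) (m k)
    rw [hi] at hilt hdiv
    have hcell : ∀ z, (T ^ n) z ∈ A k → z ∈ (⇑(T ^ i)) '' A k := by
      intro z hz
      refine ⟨(T ^ (m k * (-n / m k) : ℤ)) ((T ^ n) z), ?_, ?_⟩
      · exact (zpow_apply_mem_iff_dvd (hA k) hz _).2 ⟨_, rfl⟩
      · rw [← zpow_natCast, ← Equiv.Perm.mul_apply, ← Equiv.Perm.mul_apply, ← zpow_add,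
          ← zpow_add, show (i : ℤ) + m k * (-n / m k) + n = 0 by linarith]
        simp
    exact hk i (by omega) ⟨hcell x hx, hcell y hy⟩
  have hrefine' : ∀ k, ∃ j : ℤ, ∀ z ∈ A (k + 1), (T ^ j) z ∈ A k := by
    intro k
    obtain ⟨j, -, hj⟩ := hrefine k 0 (hpos _)
    refine ⟨-j, fun z hz => ?_⟩
    obtain ⟨w, hw, hwz⟩ := hj ⟨z, hz, rfl⟩
    have hwz : (T ^ j) w = z := hwz
    rw [← hwz, ← zpow_natCast, ← Equiv.Perm.mul_apply, ← zpow_add]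
    simpa using hw
  obtain ⟨p, hpc, hp, hp', S, hSc, hSc', hS⟩ := exists_speedup_of_clopen T hTc hTc' (A N)
    (hclopen N).2 ((c - 1) * m N) fun x => by
      obtain ⟨r, hr⟩ := hA N x
      rw [← zpow_natCast, hr, show x ∈ A N ↔ (T ^ (0 : ℤ)) x ∈ A N by simp, hr, sub_eq_add_neg,
        zero_sub, dvd_add_right (by simp)]
  refine ⟨p, hpc, fun x => ?_, ⟨(c - 1) * m N + 1, fun x => ?_⟩, S, hSc, hSc', hS, ?_,
    isOrbitNumber_speedup (hpos N) hc (hA N) hfree hp hp' hS⟩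
  · by_cases hx : T x ∈ A N
    · rw [hp x hx]; omega
    · rw [hp' x hx]
  · by_cases hx : T x ∈ A N
    · rw [hp x hx]
    · rw [hp' x hx]; omega
  · intro y
    obtain ⟨b, hb, hyb⟩ := exists_base_zOrbit_speedup_eq (hpos N) hc (hA N) hp hp' hS y
    change Dense (zOrbit S y)
    rw [hyb]
    intro w
    rw [mem_closure_iff_nhds]
    intro U hU
    obtain ⟨k, hk, n, -, hsub⟩ := exists_cell_subset hTc hTc' (fun k => (hclopen k).2.isClosed)
      hrefine' hA hsep' w hU N
    obtain ⟨L, hL, hcL⟩ := hcop k hk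
    obtain ⟨r, hr⟩ := hA k b
    obtain ⟨u, v, huv⟩ := Nat.isCoprime_iff_coprime.2 hcL
    have hM : (0 : ℤ) < m N := by exact_mod_cast hpos N
    have hdiv := Int.mul_ediv_add_emod (r - n) (m N)
    refine ⟨_, hsub _ ?_, (mem_zOrbit_speedup_iff (hpos N) hc (hA N) hp hp' hS hb _).2
      ⟨u * ((r - n) / m N), (r - n) % m N, Int.emod_nonneg _ hM.ne',
        Int.emod_lt_of_pos _ hM, rfl⟩⟩
    rw [← Equiv.Perm.mul_apply, ← zpow_add, hr, hL]
    refine ⟨-v * ((r - n) / m N), ?_⟩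
    push_cast
    linear_combination hdiv + (m N : ℤ) * ((r - n) / m N) * huv
end

section
/- Let (X,T) be an odometer system with partition data of sizes m_k, and write α_k = m_k/m_{k−1} (with m_0 = 1). Suppose that every prime number divides α_i for infinitely many i. Then the only minimal bounded speedup of (X,T) is T itself: if p : X → ℤ⁺ is a bounded function such that S(x) = T^{p(x)}(x) defines a minimal homeomorphism S : X → X, then p(x) = 1 for all x ∈ X. -/
/-- The addresses of points in the towers of an odometer, as continuous maps to `ZMod (m k)`. -/
theorem IsOdometerData.exists_address {X : Type*} [TopologicalSpace X] {T : Equiv.Perm X}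
    (hTc' : Continuous T.symm) {m : ℕ → ℕ} {A : ℕ → Set X} (h : IsOdometerData T m A)
    (hm : ∀ k, 0 < m k) :
    ∃ φ : ∀ k, X → ZMod (m k), (∀ k, Continuous (φ k)) ∧ (∀ k x, φ k (T x) = φ k x + 1) ∧
      (∀ k x y, φ (k + 1) x = φ (k + 1) y → φ k x = φ k y) ∧
      (∀ x y, (∀ k, φ k x = φ k y) → x = y) := by
  obtain ⟨-, -, -, hA, hdisj, hcov, hper, href, hsep⟩ := h
  have hex : ∀ k x, ∃ i, i < m k ∧ x ∈ (⇑(T ^ i)) '' A k := fun k x => by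
    have hx : x ∈ ⋃ i < m k, (⇑(T ^ i)) '' A k := by rw [hcov]; trivial
    simpa only [Set.mem_iUnion, exists_prop] using hx
  choose a ha hxa using hex
  have huniq : ∀ k x i, i < m k → x ∈ (⇑(T ^ i)) '' A k → a k x = i := by
    intro k x i hi hx
    by_contra hne
    exact Set.disjoint_left.1 (hdisj k _ (ha k x) _ hi hne) (hxa k x) hx
  have hinj : ∀ k x y, (a k x : ZMod (m k)) = a k y → a k x = a k y := by
    intro k x y hxy
    exact Nat.ModEq.eq_of_lt_of_lt ((ZMod.natCast_eq_natCast_iff _ _ _).1 hxy) (ha k x) (ha k y)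
  refine ⟨fun k x => (a k x : ZMod (m k)), fun k => ?_, fun k x => ?_, fun k x y hxy => ?_,
    fun x y hxy => ?_⟩
  · refine continuous_discrete_rng.2 fun c => ?_
    have : NeZero (m k) := ⟨(hm k).ne'⟩
    have hfib : (fun x => (a k x : ZMod (m k))) ⁻¹' {c} = (⇑(T ^ c.val)) '' A k := by
      ext x
      simp only [Set.mem_preimage, Set.mem_singleton_iff]
      constructor
      · rintro rfl
        rw [ZMod.val_cast_of_lt (ha k x)]
        exact hxa k x
      · intro hx
        rw [huniq k x _ c.val_lt hx, ZMod.natCast_zmod_val]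
    have hcont : ∀ n : ℕ, Continuous (⇑(T ^ n).symm) := by
      intro n
      induction n with
      | zero => exact continuous_id
      | succ n ih =>
        have : ⇑(T ^ (n + 1)).symm = T.symm ∘ (T ^ n).symm := by
          rw [pow_succ]; rfl
        rw [this]
        exact hTc'.comp ih
    rw [hfib, Equiv.image_eq_preimage_symm]
    exact (hA k).2.isOpen.preimage (hcont _)
  · obtain ⟨y, hy, hyx⟩ := hxa k x
    have hTx : T x = (T ^ (a k x + 1)) y := by rw [pow_succ', Equiv.Perm.mul_apply, hyx]
    rcases (Nat.succ_le_of_lt (ha k x)).lt_or_eq with hlt | heq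
    · beta_reduce
      rw [huniq k (T x) (a k x + 1) hlt ⟨y, hy, hTx.symm⟩]
      push_cast
      rfl
    · have hmem : T x ∈ A k := by
        rw [← hper k, hTx, ← heq]
        exact ⟨y, hy, rfl⟩
      have h0 : a k (T x) = 0 := huniq k (T x) 0 (hm k) ⟨T x, hmem, rfl⟩
      have hcast : ((a k x + 1 : ℕ) : ZMod (m k)) = 0 := by
        rw [show a k x + 1 = m k from heq, ZMod.natCast_self]
      beta_reduce
      rw [h0, Nat.cast_zero, ← hcast]
      push_cast
      rfl
  · have hxy' := hinj _ _ _ hxy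
    obtain ⟨j, hj, hsub⟩ := href k _ (ha (k + 1) x)
    have h1 := huniq k x j hj (hsub (hxa (k + 1) x))
    have h2 := huniq k y j hj (hsub (hxy' ▸ hxa (k + 1) y))
    simp only [h1, h2]
  · by_contra hne
    obtain ⟨k, hk⟩ := hsep x y hne
    exact hk _ (ha k x) ⟨hxa k x, hinj _ _ _ (hxy k) ▸ hxa k y⟩

/-- On a compact space, a continuous map to a discrete space factors set-theoretically through some
member of any successively finer sequence of continuous maps that separates points. -/
theorem exists_factor_of_separating {X Y : Type*} [TopologicalSpace X] [CompactSpace X]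
    [TopologicalSpace Y] [DiscreteTopology Y] {p : X → Y} (hp : Continuous p)
    {Z : ℕ → Type*} [∀ k, TopologicalSpace (Z k)] [∀ k, T2Space (Z k)] {φ : ∀ k, X → Z k}
    (hφ : ∀ k, Continuous (φ k))
    (hmono : ∀ k x y, φ (k + 1) x = φ (k + 1) y → φ k x = φ k y)
    (hsep : ∀ x y, (∀ k, φ k x = φ k y) → x = y) :
    ∃ k, ∀ x y, φ k x = φ k y → p x = p y := by
  by_contra! hcon
  let C : ℕ → Set (X × X) := fun k => {z | φ k z.1 = φ k z.2} ∩ {z | p z.1 ≠ p z.2}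
  have hne : IsClosed {z : X × X | p z.1 ≠ p z.2} :=
    (isClosed_discrete {w : Y × Y | w.1 ≠ w.2}).preimage
      ((hp.comp continuous_fst).prodMk (hp.comp continuous_snd))
  have hC : ∀ k, IsClosed (C k) := fun k =>
    (isClosed_eq ((hφ k).comp continuous_fst) ((hφ k).comp continuous_snd)).inter hne
  obtain ⟨z, hz⟩ := IsCompact.nonempty_iInter_of_sequence_nonempty_isCompact_isClosed C
    (fun k z hz => ⟨hmono k _ _ hz.1, hz.2⟩)
    (fun k => by
      obtain ⟨x, y, hxy, hpxy⟩ := hcon k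
      exact ⟨(x, y), hxy, hpxy⟩)
    (hC 0).isCompact hC
  rw [Set.mem_iInter] at hz
  exact (hz 0).2 (congrArg p (hsep _ _ fun k => (hz k).1))

theorem IsMinimalHomeo.exists_zpow_apply_eq {X Z : Type*} [TopologicalSpace X]
    [TopologicalSpace Z] [DiscreteTopology Z] {S : Equiv.Perm X} (hS : IsMinimalHomeo S)
    {ψ : X → Z} (hψ : Continuous ψ) (hsurj : Function.Surjective ψ) (x : X) (c : Z) :
    ∃ n : ℤ, ψ ((S ^ n) x) = c := by
  obtain ⟨y, hy⟩ := hsurj c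
  obtain ⟨_, ⟨n, rfl⟩, hz⟩ := (hS x).exists_mem_open ((isOpen_discrete {c}).preimage hψ) ⟨y, hy⟩
  exact ⟨n, hz⟩

section Equivariant

variable {X : Type*} {T : Equiv.Perm X} {N : ℕ} {ψ : X → ZMod N}

theorem equivariant_pow (hψ : ∀ x, ψ (T x) = ψ x + 1) (n : ℕ) (x : X) :
    ψ ((T ^ n) x) = ψ x + n := by
  induction n with
  | zero => simp
  | succ n ih => rw [pow_succ', Equiv.Perm.mul_apply, hψ, ih]; push_cast; ring

theorem equivariant_surjective [NeZero N] [Nonempty X] (hψ : ∀ x, ψ (T x) = ψ x + 1) :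
    Function.Surjective ψ := by
  intro c
  obtain ⟨x⟩ := ‹Nonempty X›
  refine ⟨(T ^ (c - ψ x).val) x, ?_⟩
  rw [equivariant_pow hψ, ZMod.natCast_zmod_val]
  ring

end Equivariant

/-- If a minimal `S` has a continuous surjection onto `ZMod n` that is invariant under `S ^ N`,
then `n ≤ N`. -/
theorem IsMinimalHomeo.le_of_pow_invariant {X : Type*} [TopologicalSpace X] [Nonempty X]
    {S : Equiv.Perm X} (hS : IsMinimalHomeo S) {n N : ℕ} [NeZero n] (hN : 0 < N)
    {ψ : X → ZMod n} (hψ : Continuous ψ) (hsurj : Function.Surjective ψ)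
    (hinv : ∀ x, ψ ((S ^ N) x) = ψ x) : n ≤ N := by
  obtain ⟨x⟩ := ‹Nonempty X›
  have hinvnat : ∀ (j : ℕ) (y : X), ψ (((S ^ N) ^ j) y) = ψ y := by
    intro j
    induction j with
    | zero => simp
    | succ j ih => intro y; rw [pow_succ', Equiv.Perm.mul_apply, hinv, ih]
  have hinvint : ∀ (j : ℤ) (y : X), ψ (((S ^ N) ^ j) y) = ψ y := by
    intro j y
    obtain ⟨j, rfl | rfl⟩ := j.eq_nat_or_neg
    · exact_mod_cast hinvnat j y
    · have := hinvnat j (((S ^ N) ^ (-(j : ℤ))) y)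
      rw [← Equiv.Perm.mul_apply, ← zpow_natCast, ← zpow_add] at this
      simpa using this.symm
  have hsurj' : Function.Surjective fun r : Fin N => ψ ((S ^ (r : ℕ)) x) := by
    intro c
    obtain ⟨l, hl⟩ := hS.exists_zpow_apply_eq hψ hsurj x c
    have hN0 : (N : ℤ) ≠ 0 := by exact_mod_cast hN.ne'
    have hr := Int.emod_nonneg l hN0
    have hr' := Int.emod_lt_of_pos l (by exact_mod_cast hN : (0 : ℤ) < N)
    refine ⟨⟨(l % N).toNat, by omega⟩, ?_⟩
    have hsplit : S ^ l = (S ^ N) ^ (l / N) * S ^ (l % N).toNat := by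
      rw [← zpow_natCast S N, ← zpow_natCast S (l % N).toNat, Int.toNat_of_nonneg hr, ← zpow_mul,
        ← zpow_add, Int.mul_ediv_add_emod]
    rw [hsplit, Equiv.Perm.mul_apply, hinvint] at hl
    exact hl
  have := Fintype.card_le_of_surjective _ hsurj'
  simpa [ZMod.card] using this

/-- If the jump function `p` of a minimal speedup factors through an equivariant map to `ZMod N`,
then `S ^ N` is a constant power of `T`, the exponent being the sum of the values of `p`. -/
theorem pow_speedup_eq {X : Type*} [TopologicalSpace X] [Nonempty X] {S T : Equiv.Perm X}
    (hS : IsMinimalHomeo S) {N : ℕ} [NeZero N] {φ : X → ZMod N} (hφ : Continuous φ)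
    (hφT : ∀ x, φ (T x) = φ x + 1) {g : ZMod N → ℕ} (hSg : ∀ x, S x = (T ^ g (φ x)) x) (x : X) :
    (S ^ N) x = (T ^ ∑ c, g c) x ∧ φ ((S ^ N) x) = φ x := by
  have hsurj := equivariant_surjective hφT
  have hφS : ∀ x, φ (S x) = φ x + g (φ x) := fun x => by rw [hSg, equivariant_pow hφT]
  have hfsurj : Function.Surjective fun c : ZMod N => c + g c := by
    intro c
    obtain ⟨y, rfl⟩ := hsurj c
    exact ⟨φ (S.symm y), by simpa using (hφS (S.symm y)).symm⟩
  let f : Equiv.Perm (ZMod N) :=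
    Equiv.ofBijective _ ⟨Finite.injective_iff_surjective.2 hfsurj, hfsurj⟩
  have hf : Function.Semiconj φ S f := hφS
  have hfpow : ∀ (n : ℕ) (y : X), φ ((S ^ n) y) = (f ^ n) (φ y) := by
    intro n
    induction n with
    | zero => simp
    | succ n ih => intro y; rw [pow_succ', pow_succ', Equiv.Perm.mul_apply, hf, ih]; rfl
  have hfzpow : ∀ (n : ℤ) (y : X), φ ((S ^ n) y) = (f ^ n) (φ y) := by
    intro n y
    obtain ⟨n, rfl | rfl⟩ := n.eq_nat_or_neg
    · exact_mod_cast hfpow n y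
    · have := hfpow n ((S ^ (-(n : ℤ))) y)
      rw [← Equiv.Perm.mul_apply, ← zpow_natCast, ← zpow_add] at this
      rw [zpow_neg f, Equiv.Perm.eq_inv_iff_eq, zpow_natCast f, ← this]
      simp
  have hcyc : f.IsCycleOn ((Finset.univ : Finset (ZMod N)) : Set (ZMod N)) := by
    rw [Finset.coe_univ]
    refine ⟨f.bijective.bijOn_univ, fun a _ b _ => ?_⟩
    obtain ⟨y, rfl⟩ := hsurj a
    obtain ⟨n, hn⟩ := hS.exists_zpow_apply_eq hφ hsurj y b
    exact ⟨n, by rw [← hfzpow, hn]⟩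
  have hsum : ∀ n : ℕ, (S ^ n) x = (T ^ ∑ i ∈ Finset.range n, g ((f ^ i) (φ x))) x := by
    intro n
    induction n with
    | zero => simp
    | succ n ih =>
      rw [pow_succ', Equiv.Perm.mul_apply, hSg, hfpow, ih, Finset.sum_range_succ, add_comm,
        pow_add, Equiv.Perm.mul_apply]
  have hcard : (Finset.univ : Finset (ZMod N)).card = N := by
    rw [Finset.card_univ, ZMod.card]
  have hbij : Function.Bijective fun i : Fin N => (f ^ (i : ℕ)) (φ x) := by
    rw [Fintype.bijective_iff_surjective_and_card]
    refine ⟨fun c => ?_, by simp [ZMod.card]⟩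
    obtain ⟨n, hn, hc⟩ := hcyc.exists_pow_eq (Finset.mem_univ (φ x)) (Finset.mem_univ c)
    exact ⟨⟨n, hcard ▸ hn⟩, hc⟩
  constructor
  · rw [hsum, Finset.sum_range, ← hbij.sum_comp g]
  · have := hcyc.pow_card_apply (Finset.mem_univ (φ x))
    rwa [hcard, ← hfpow] at this

/-- If `(X,T)` is an odometer with partition sizes `m k` such that every
prime divides `α_i = m (i+1) / m i` for infinitely many `i`, then the only minimal bounded
speedup of `(X,T)` is `T` itself: any bounded jump function giving a minimal speedup is
identically `1`. -/
theorem odometer_no_nontrivial_boundedSpeedup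
    {X : Type*} [TopologicalSpace X] [CompactSpace X]
    [TopologicalSpace.MetrizableSpace X] [TotallyDisconnectedSpace X] [PerfectSpace X]
    [Nonempty X]
    (T : Equiv.Perm X) (hTc : Continuous T) (hTc' : Continuous T.symm)
    (hTmin : IsMinimalHomeo T)
    (m : ℕ → ℕ) (A : ℕ → Set X) (hodo : IsOdometerData T m A)
    (hprime : ∀ q : ℕ, q.Prime → ∀ N : ℕ, ∃ i, N ≤ i ∧ q ∣ m (i + 1) / m i)
    (p : X → ℕ) (hp1 : ∀ x, 1 ≤ p x) (hpbdd : ∃ M : ℕ, ∀ x, p x ≤ M)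
    (S : Equiv.Perm X) (hSc : Continuous S) (hSc' : Continuous S.symm)
    (hSp : ∀ x, S x = (T ^ p x) x) (hSmin : IsMinimalHomeo S) :
    ∀ x : X, p x = 1 := by
  have hdvd : ∀ k, m k ∣ m (k + 1) := hodo.2.1
  have hgrow : ∀ k, k < m k := by
    intro k
    induction k with
    | zero => have := hodo.1; omega
    | succ k ih => have := hodo.2.2.1 k; omega
  have hm : ∀ k, 0 < m k := fun k => (Nat.zero_le k).trans_lt (hgrow k)
  have : ∀ k, NeZero (m k) := fun k => ⟨(hm k).ne'⟩
  obtain ⟨φ, hφ, hφT, hmono, hsep⟩ := hodo.exists_address hTc' hm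
  obtain ⟨M, hM⟩ := hpbdd
  have hpval : p = fun x => (φ M (S x) - φ M x).val := by
    funext x
    rw [hSp, equivariant_pow (hφT M), add_sub_cancel_left,
      ZMod.val_cast_of_lt ((hM x).trans_lt (hgrow M))]
  have hpc : Continuous p := by
    rw [hpval]
    exact continuous_of_discreteTopology.comp (((hφ M).comp hSc).sub (hφ M))
  obtain ⟨k, hk⟩ := exists_factor_of_separating hpc hφ hmono hsep
  have hsurj := equivariant_surjective (hφT k)
  obtain ⟨s, hs⟩ := hsurj.hasRightInverse
  have hgp : ∀ x, p (s (φ k x)) = p x := fun x => hk _ _ (hs _)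
  have hpow := pow_speedup_eq hSmin (hφ k) (hφT k) (g := fun c => p (s c))
    (fun x => by rw [hgp, hSp])
  set D := ∑ c, p (s c) with hD
  obtain ⟨d, hd⟩ : m k ∣ D := by
    obtain ⟨x⟩ := ‹Nonempty X›
    have h := (hpow x).2
    rw [(hpow x).1, equivariant_pow (hφT k)] at h
    exact (ZMod.natCast_eq_zero_iff _ _).1 (by simpa using h)
  have hd1 : d = 1 := by
    by_contra hne
    obtain ⟨q, hq, hqd⟩ := Nat.exists_prime_and_dvd hne
    obtain ⟨i, hki, hqi⟩ := hprime q hq k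
    have hqm : q * m k ∣ m (i + 1) := by
      rw [← Nat.div_mul_cancel (hdvd i)]
      exact mul_dvd_mul hqi (Nat.le_induction dvd_rfl (fun j _ h => h.trans (hdvd j)) i hki)
    have : NeZero (q * m k) := ⟨(Nat.mul_pos hq.pos (hm k)).ne'⟩
    let ψ : X → ZMod (q * m k) := fun x => ZMod.castHom hqm _ (φ (i + 1) x)
    have hψ : Continuous ψ := continuous_of_discreteTopology.comp (hφ (i + 1))
    have hψT : ∀ x, ψ (T x) = ψ x + 1 := fun x => by
      simp only [ψ, hφT, map_add, map_one]
    have hle := hSmin.le_of_pow_invariant (hm k) hψ (equivariant_surjective hψT) fun x => by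
      rw [(hpow x).1, equivariant_pow hψT, (ZMod.natCast_eq_zero_iff _ _).2, add_zero]
      rw [hd, mul_comm q]
      exact Nat.mul_dvd_mul_left _ hqd
    have := Nat.mul_le_mul_right (m k) hq.two_le
    have := hm k
    omega
  have hall : ∀ c ∈ Finset.univ, 1 = p (s c) :=
    (Finset.sum_eq_sum_iff_of_le fun c _ => hp1 (s c)).1 (by
      rw [← hD, hd, hd1]
      simp [ZMod.card])
  intro x
  rw [← hgp, ← hall _ (Finset.mem_univ _)]
end
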